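/- arXiv:2512.12804 — 6 statements merged into one kernel-verified Lean document; each statement's English description precedes it below -/
import Mathlib

section
/- For every causal model M and any two binary endogenous variables X, Y ∈ V (with values in {0,1}): the Probability of Necessity and Sufficiency computed via the B-semantics equals the one computed in the PO-SCM, i.e., PNS^B = P^B((Y=1)_{X←1}, (Y=0)_{X←0}) = P^N((Y=1)_{X←1}, (Y=0)_{X←0}) = PNS^N. -/
/-!
Split both probabilities according to the actual world `w`, that is, the values of all the
original variables. Since `X` is binary, its value in `w` is the antecedent of one of the two
counterfactuals. By consistency (`CM.bEval_consistent`, `CM.poEval_consistent`), that conjunct is,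
in both semantics, just the indicator that `Y` has the required value in `w`. So only a *basic*
counterfactual, weighted by the probability of `w`, is left, and for these the two semantics
agree (`CM.sum_poEval`): conditioning the PO-SCM on `w` fixes the potential outcome of each
variable at the actual values of its parents and leaves the others independent with their
original distributions, which is precisely the actualized refinement. The computation is done
one endogenous variable at a time in `CM.prod_sum_local`.

Basic counterfactuals are defined as quotients; `CM.cfBasic_eq` rewrites them as plain sums at
worlds of nonzero probability, and worlds of probability zero contribute nothing.
-/
open Finset

noncomputable section

attribute [local instance] Classical.propDecidable

/-- An assignment of values to the variables. -/
abbrev Asg {ν : Type} (Val : ν → Type) : Type := (i : ν) → Val i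

/-- A probabilistic causal model (a causal Bayesian network with explicit exogenous
variables): a signature (variables `ν` with value sets `Val`), a graph given by the
parent map `pa` (with `ord` a witness of acyclicity, and the variables in `exo` being
the roots), and a joint probability distribution that is Markov relative to the graph,
presented by the conditional probability table `cpt i w x = P(i = x | pa i = w|_{pa i})`
of each variable given its parents (for exogenous variables this is the marginal). -/
structure CM (ν : Type) (Val : ν → Type) : Type where
  exo : Finset ν
  pa : ν → Finset ν
  ord : ν → ℕ
  cpt : (i : ν) → Asg Val → Val i → ℝ

/-- A basic counterfactual event `(Y = yv)_{X ← xv}`. -/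
structure CFEvent (ν : Type) (Val : ν → Type) : Type where
  X : Finset ν
  xv : Asg Val
  Y : Finset ν
  yv : Asg Val

namespace CM

variable {ν : Type} {Val : ν → Type}

/-- Well-formedness of a causal model: exogenous variables are roots, the graph is
acyclic, the conditional probability table of each variable depends only on its
parents, and each table is a probability distribution. -/
structure WF [Fintype ν] [∀ i, Fintype (Val i)] (M : CM ν Val) : Prop where
  pa_exo : ∀ i ∈ M.exo, M.pa i = ∅
  acyclic : ∀ i j, j ∈ M.pa i → M.ord j < M.ord i
  cpt_pa : ∀ (i : ν) (w w' : Asg Val) (x : Val i),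
    (∀ j ∈ M.pa i, w j = w' j) → M.cpt i w x = M.cpt i w' x
  cpt_nonneg : ∀ i w x, 0 ≤ M.cpt i w x
  cpt_sum : ∀ i w, ∑ x, M.cpt i w x = 1

variable [Fintype ν] [∀ i, Fintype (Val i)] [∀ i, Nonempty (Val i)]

variable (M : CM ν Val)

/-- The joint distribution `P(U = u, V = v)` (Markov factorization). -/
def joint (w : Asg Val) : ℝ := ∏ i, M.cpt i w (w i)

/-- The interventional distribution `P_{do(X = xv)}` (truncated factorization). -/
def pdo (X : Finset ν) (xv w : Asg Val) : ℝ :=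
  if ∀ i ∈ X, w i = xv i then ∏ i ∈ Xᶜ, M.cpt i w (w i) else 0

/-- `P_{do(X = xv)}(Y = yv | U = u)`, where `u` is the exogenous part of `w`:
the probability of the basic counterfactual `(Y = yv)_{X ← xv}` given the world `w`. -/
def cfBasic (X : Finset ν) (xv : Asg Val) (Y : Finset ν) (yv : Asg Val) (w : Asg Val) : ℝ :=
  (∑ w' : Asg Val,
      if (∀ i ∈ M.exo, w' i = w i) ∧ ∀ i ∈ Y, w' i = yv i then M.pdo X xv w' else 0) /
  (∑ w' : Asg Val, if ∀ i ∈ M.exo, w' i = w i then M.pdo X xv w' else 0)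

/-- The probability of a complex counterfactual
`P(y_x, …, z_w) = Σ_{(u,v)} P(y_x | u,v) ⋯ P(z_w | u,v) P(u,v)`. -/
def cfProb (evs : List (CFEvent ν Val)) : ℝ :=
  ∑ w : Asg Val, (evs.map fun e => M.cfBasic e.X e.xv e.Y e.yv w).prod * M.joint w

/-- Conditional probability of a complex counterfactual given an actual event `Z = zv`:
`P(y_x, …, z_w | Z = zv) = P(y_x, …, z_w, Z = zv) / P(Z = zv)`. -/
def cfProbCond (evs : List (CFEvent ν Val)) (Z : Finset ν) (zv : Asg Val) : ℝ :=
  (∑ w : Asg Val,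
      (if ∀ i ∈ Z, w i = zv i then (evs.map fun e => M.cfBasic e.X e.xv e.Y e.yv w).prod
       else 0) * M.joint w) /
  (∑ w : Asg Val, if ∀ i ∈ Z, w i = zv i then M.joint w else 0)

/-- `M` is a structural causal model: every endogenous variable is a deterministic
function of its parents (the exogenous variables are automatically mutually
independent in this presentation). -/
def IsSCM : Prop :=
  ∀ i ∉ M.exo, ∀ (w : Asg Val) (x : Val i), M.cpt i w x = 0 ∨ M.cpt i w x = 1

/-- The actualized refinement `M^{(u,v)}` of `M` at the actual world `a`:
for each endogenous variable, the conditional distribution given the *actual* values of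
its parents is replaced by the point mass at the actual value of the variable. -/
def refine (a : Asg Val) : CM ν Val where
  exo := M.exo
  pa := M.pa
  ord := M.ord
  cpt := fun i w x =>
    if i ∉ M.exo ∧ ∀ j ∈ M.pa i, w j = a j then (if x = a i then 1 else 0)
    else M.cpt i w x

/-- The B-semantics probability of a basic counterfactual,
`P^B((Y = yv)_{X ← xv} | a) = (P^{a})_{do(X = xv)}(Y = yv | U = u)` where `u` is the
exogenous part of the actual world `a`. -/
def pbBasic (a : Asg Val) (X : Finset ν) (xv : Asg Val) (Y : Finset ν) (yv : Asg Val) : ℝ :=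
  (M.refine a).cfBasic X xv Y yv a

/-- The B-semantics probability of a complex counterfactual. -/
def pbProb (evs : List (CFEvent ν Val)) : ℝ :=
  ∑ w : Asg Val, (evs.map fun e => M.pbBasic w e.X e.xv e.Y e.yv).prod * M.joint w

/-- The conditional B-semantics probability of a complex counterfactual given `Z = zv`. -/
def pbProbCond (evs : List (CFEvent ν Val)) (Z : Finset ν) (zv : Asg Val) : ℝ :=
  (∑ w : Asg Val,
      (if ∀ i ∈ Z, w i = zv i then (evs.map fun e => M.pbBasic w e.X e.xv e.Y e.yv).prod
       else 0) * M.joint w) /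
  (∑ w : Asg Val, if ∀ i ∈ Z, w i = zv i then M.joint w else 0)

/-- An assignment of values to the parents of `i`. -/
def PaAsg (i : ν) : Type := (j : {j : ν // j ∈ M.pa i}) → Val j.1

instance (i : ν) : Fintype (M.PaAsg i) := by unfold PaAsg; infer_instance
instance (i : ν) : Nonempty (M.PaAsg i) := ⟨fun j => Classical.arbitrary (Val j.1)⟩

/-- Extend an assignment of the parents of `i` to a full assignment (arbitrarily). -/
def extendPa (i : ν) (κ : M.PaAsg i) : Asg Val :=
  fun j => if h : j ∈ M.pa i then κ ⟨j, h⟩ else Classical.arbitrary (Val j)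

/-- The index type of the potential outcome variables `X_{pa_X}` of the PO-SCM:
one for each endogenous variable `X` and each value `pa_X` of its parents. -/
def POI : Type := Σ i : {i : ν // i ∉ M.exo}, M.PaAsg i.1

instance : Fintype (POI M) := by unfold POI; infer_instance

/-- The value set of the potential outcome variable `X_{pa_X}` is that of `X`. -/
def POB : POI M → Type := fun p => Val p.1.1

instance (p : POI M) : Fintype (POB M p) := by unfold POB; infer_instance
instance (p : POI M) : Nonempty (POB M p) := by unfold POB; infer_instance

/-- The type of values of the response variable `U_X` of the canonical frame:
functions from values of the parents of `X` to values of `X`. -/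
def RType (i : ν) : Type := M.PaAsg i → Val i

instance (i : ν) : Fintype (M.RType i) := by unfold RType; infer_instance
instance (i : ν) : Nonempty (M.RType i) := ⟨fun _ => Classical.arbitrary (Val i)⟩

/-- The index type of the response variables of the canonical frame:
one for each endogenous variable. -/
def RVI : Type := {i : ν // i ∉ M.exo}

instance : Fintype (RVI M) := by unfold RVI; infer_instance

/-- The value set of the response variable `U_X`. -/
def RB : RVI M → Type := fun p => M.RType p.1

instance (p : RVI M) : Fintype (RB M p) := by unfold RB; infer_instance
instance (p : RVI M) : Nonempty (RB M p) := by unfold RB; infer_instance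

end CM

/-- The family of value sets of an extended signature `ν ⊕ β`. -/
def SumVal {ν β : Type} (Val : ν → Type) (B : β → Type) : ν ⊕ β → Type := fun i =>
  match i with
  | .inl j => Val j
  | .inr b => B b

section SumValInst

variable {ν β : Type} {Val : ν → Type} {B : β → Type}

instance [∀ i, Fintype (Val i)] [∀ b, Fintype (B b)] (i : ν ⊕ β) :
    Fintype (SumVal Val B i) := by
  cases i with
  | inl j => exact inferInstanceAs (Fintype (Val j))
  | inr b => exact inferInstanceAs (Fintype (B b))

instance [∀ i, Nonempty (Val i)] [∀ b, Nonempty (B b)] (i : ν ⊕ β) :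
    Nonempty (SumVal Val B i) := by
  cases i with
  | inl j => exact inferInstanceAs (Nonempty (Val j))
  | inr b => exact inferInstanceAs (Nonempty (B b))

/-- Lift an assignment on `ν` to one on `ν ⊕ β` (arbitrary on the new variables). -/
def liftAsg [∀ b, Nonempty (B b)] (xv : Asg Val) : Asg (SumVal Val B) := fun i =>
  match i with
  | .inl j => xv j
  | .inr b => Classical.arbitrary (B b)

/-- Lift a counterfactual event on the original variables to the extended signature. -/
def liftCFEvent [∀ b, Nonempty (B b)] (e : CFEvent ν Val) : CFEvent (ν ⊕ β) (SumVal Val B) :=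
  ⟨e.X.image Sum.inl, liftAsg e.xv, e.Y.image Sum.inl, liftAsg e.yv⟩

variable [Fintype ν] [Fintype β] [∀ i, Fintype (Val i)] [∀ b, Fintype (B b)]
  [∀ i, Nonempty (Val i)] [∀ b, Nonempty (B b)]

/-- The probability, computed in a model `N` over an extended signature, of a complex
counterfactual over the original variables. -/
def extProb (N : CM (ν ⊕ β) (SumVal Val B)) (evs : List (CFEvent ν Val)) : ℝ :=
  N.cfProb (evs.map liftCFEvent)

/-- The probability, computed in a model `N` over an extended signature, of a complex
counterfactual over the original variables, conditional on an actual event `Z = zv`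
over the original variables. -/
def extProbCond (N : CM (ν ⊕ β) (SumVal Val B)) (evs : List (CFEvent ν Val))
    (Z : Finset ν) (zv : Asg Val) : ℝ :=
  N.cfProbCond (evs.map liftCFEvent) (Z.image Sum.inl) (liftAsg zv)

/-- The probability, computed in a model `N` over an extended signature, of a basic
counterfactual conditional on the values `a` of *all* the original variables
(marginalizing over the added exogenous variables), via the law of total probability. -/
def extBasicCond (N : CM (ν ⊕ β) (SumVal Val B)) (a : Asg Val)
    (X : Finset ν) (xv : Asg Val) (Y : Finset ν) (yv : Asg Val) : ℝ :=
  (∑ w : Asg (SumVal Val B),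
      if ∀ i : ν, w (Sum.inl i) = a i then
        N.cfBasic (X.image Sum.inl) (liftAsg xv) (Y.image Sum.inl) (liftAsg yv) w * N.joint w
      else 0) /
  (∑ w : Asg (SumVal Val B), if ∀ i : ν, w (Sum.inl i) = a i then N.joint w else 0)

end SumValInst

namespace CM

variable {ν : Type} {Val : ν → Type} [Fintype ν] [∀ i, Fintype (Val i)] [∀ i, Nonempty (Val i)]
variable (M : CM ν Val)

/-- The PO-SCM `M^N` of `M`: the structural causal model obtained from `M` by adding,
for each endogenous variable `X` and each value `pa_X` of its parents, an exogenous
potential outcome variable `X_{pa_X}` (with marginal `P_M(X | Pa_X = pa_X)`, all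
exogenous variables mutually independent), and the structural equation
`X = X_{pa_X}` whenever `Pa_X = pa_X`. -/
def MN : CM (ν ⊕ POI M) (SumVal Val (POB M)) where
  exo := (M.exo.image Sum.inl) ∪ (univ.image Sum.inr)
  pa := fun i =>
    match i with
    | .inl j => ((M.pa j).image Sum.inl) ∪
        ((univ.filter fun p : POI M => p.1.1 = j).image Sum.inr)
    | .inr _ => ∅
  ord := fun i =>
    match i with
    | .inl j => M.ord j + 1
    | .inr _ => 0
  cpt := fun i =>
    match i with
    | .inl j => fun w x =>
        if h : j ∈ M.exo then M.cpt j (fun k => w (Sum.inl k)) x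
        else if x = w (Sum.inr ⟨⟨j, h⟩, fun k => w (Sum.inl k.1)⟩) then 1 else 0
    | .inr p => fun _ x => M.cpt p.1.1 (M.extendPa p.1.1 p.2) x

/-- `P^N(y_x, …, z_w)`: the probability of a complex counterfactual computed in the
PO-SCM `M^N`. -/
def pnProb (evs : List (CFEvent ν Val)) : ℝ := extProb M.MN evs

/-- `P^N(y_x, …, z_w | Z = zv)`: the conditional probability of a complex
counterfactual computed in the PO-SCM `M^N`, given an actual event on the
endogenous variables. -/
def pnProbCond (evs : List (CFEvent ν Val)) (Z : Finset ν) (zv : Asg Val) : ℝ :=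
  extProbCond M.MN evs Z zv

/-- `P^N((Y = yv)_{X ← xv} | U = u, V = v)`: the probability of a basic counterfactual
computed in the PO-SCM `M^N`, conditional on the exogenous and endogenous variables of
`M` only (marginalizing over the potential outcome variables). -/
def pnBasicCond (a : Asg Val) (X : Finset ν) (xv : Asg Val) (Y : Finset ν) (yv : Asg Val) : ℝ :=
  extBasicCond M.MN a X xv Y yv

/-- A canonical SCM for `M`, determined by a distribution `q` of the response variables:
the SCM over the canonical frame, which adds for each endogenous variable `X` an
exogenous response variable `U_X` ranging over the functions `f_X : R(Pa_X) → R(X)`,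
with the structural equation `X = f_X(Pa_X)` where `f_X` is the value of `U_X`. -/
def canonSCM (q : (p : RVI M) → RType M p.1 → ℝ) : CM (ν ⊕ RVI M) (SumVal Val (RB M)) where
  exo := (M.exo.image Sum.inl) ∪ (univ.image Sum.inr)
  pa := fun i =>
    match i with
    | .inl j => ((M.pa j).image Sum.inl) ∪
        ((univ.filter fun p : RVI M => p.1 = j).image Sum.inr)
    | .inr _ => ∅
  ord := fun i =>
    match i with
    | .inl j => M.ord j + 1
    | .inr _ => 0
  cpt := fun i =>
    match i with
    | .inl j => fun w x =>
        if h : j ∈ M.exo then M.cpt j (fun k => w (Sum.inl k)) x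
        else if x = w (Sum.inr ⟨j, h⟩) (fun k => w (Sum.inl k.1)) then 1 else 0
    | .inr p => fun _ x => q p x

/-- `q` is the distribution of the response variables of a canonical SCM for `M`:
it is a probability distribution (the response variables being mutually independent and
independent of the exogenous variables of `M`, whose distribution is kept), and it
reproduces the conditional probability tables of `M`:
`P_M(X = x | Pa_X = pa_X) = Σ_{f_X with f_X(pa_X) = x} P(U_X = f_X)`. -/
def IsCanonicalDist (q : (p : RVI M) → RType M p.1 → ℝ) : Prop :=
  (∀ p x, 0 ≤ q p x) ∧ (∀ p, ∑ f, q p f = 1) ∧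
  ∀ (p : RVI M) (κ : M.PaAsg p.1) (x : Val p.1),
    M.cpt p.1 (M.extendPa p.1 κ) x = ∑ f ∈ univ.filter (fun f : RType M p.1 => f κ = x), q p f

/-- The distribution of the response variables of the GH-SCM:
`P(U_X = f_X) = ∏_{pa_X} P_M(X = f_X(pa_X) | Pa_X = pa_X)`. -/
def qGH : (p : RVI M) → RType M p.1 → ℝ := fun p f =>
  ∏ κ : M.PaAsg p.1, M.cpt p.1 (M.extendPa p.1 κ) (f κ)

end CM

/-- A default assignment. -/
def dfltAsg {ν : Type} (Val : ν → Type) [∀ i, Nonempty (Val i)] : Asg Val :=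
  fun i => Classical.arbitrary (Val i)


set_option linter.unusedSectionVars false

/-! ### Interventional distributions and basic counterfactuals -/

/-- The assignments `w` and `a` take the same values on `S`. -/
abbrev agree {ν : Type} {Val : ν → Type} (S : Finset ν) (w a : Asg Val) : Prop := ∀ i ∈ S, w i = a i

namespace CM
variable {ν : Type} {Val : ν → Type} [Fintype ν] [∀ i, Fintype (Val i)] [∀ i, Nonempty (Val i)]

/-- A truncated factorization is a probability distribution: fixing the variables in `S` to
their values in `a`, the product of the remaining tables sums to `1`. The induction fixes a
variable of minimal order outside `S`, all of whose parents lie in `S`, so that its table no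
longer depends on the summation variable. -/
theorem sum_truncated_eq_one (N : CM ν Val) (hN : N.WF) :
    ∀ (n : ℕ) (S : Finset ν) (a : Asg Val), (Sᶜ).card = n →
      (∑ w : Asg Val, if agree S w a then ∏ i ∈ Sᶜ, N.cpt i w (w i) else 0) = 1 := by
  intro n
  induction n with
  | zero =>
    intro S a h
    have hS : S = univ := by
      rw [Finset.card_eq_zero] at h
      simpa using h
    subst hS
    have : ∀ w : Asg Val, agree univ w a ↔ w = a := fun w =>
      ⟨fun h => funext fun i => h i (mem_univ i), fun h i _ => by rw [h]⟩
    simp [this]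
  | succ n ih =>
    intro S a h
    have hne : (Sᶜ).Nonempty := by rw [← Finset.card_pos]; omega
    obtain ⟨i, hi, hmin⟩ := Finset.exists_min_image Sᶜ N.ord hne
    have hiS : i ∉ S := by simpa using hi
    have hpar : ∀ j ∈ N.pa i, j ∈ S := by
      intro j hj
      by_contra hjS
      have := hmin j (by simpa using hjS)
      have := hN.acyclic i j hj
      omega
    have hcompl : Sᶜ = insert i (insert i S)ᶜ := by
      ext k
      by_cases hk : k = i <;> simp [hk, hiS]
    have hni : i ∉ (insert i S)ᶜ := by simp
    have hcard : ((insert i S)ᶜ).card = n := by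
      rw [hcompl, Finset.card_insert_of_notMem hni] at h
      omega
    have hiff : ∀ (w : Asg Val) (x : Val i),
        agree (insert i S) w (Function.update a i x) ↔ w i = x ∧ agree S w a := by
      intro w x
      constructor
      · intro hw
        refine ⟨by simpa using hw i (by simp), fun j hj => ?_⟩
        have hji : j ≠ i := fun e => hiS (e ▸ hj)
        simpa [hji] using hw j (by simp [hj])
      · rintro ⟨h1, h2⟩ j hj
        by_cases hji : j = i
        · subst hji; simpa using h1
        · simpa [hji] using h2 j (by simpa [hji] using hj)
    calc (∑ w : Asg Val, if agree S w a then ∏ i ∈ Sᶜ, N.cpt i w (w i) else 0)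
        = ∑ w : Asg Val, ∑ x : Val i, N.cpt i a x *
            (if agree (insert i S) w (Function.update a i x) then
              ∏ i ∈ (insert i S)ᶜ, N.cpt i w (w i) else 0) := by
          refine Finset.sum_congr rfl fun w _ => ?_
          rw [Finset.sum_eq_single (w i)]
          · by_cases hw : agree S w a
            · rw [if_pos hw, if_pos ((hiff w _).2 ⟨rfl, hw⟩), hcompl,
                Finset.prod_insert hni]
              rw [hN.cpt_pa i w a (w i) fun j hj => hw j (hpar j hj)]
            · rw [if_neg hw, if_neg fun h => hw ((hiff w _).1 h).2, mul_zero]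
          · intro x _ hx
            rw [if_neg fun h => hx ((hiff w _).1 h).1.symm, mul_zero]
          · simp
      _ = ∑ x : Val i, N.cpt i a x * 1 := by
          rw [Finset.sum_comm]
          refine Finset.sum_congr rfl fun x _ => ?_
          rw [← Finset.mul_sum, ih _ _ hcard]
      _ = 1 := by simp [hN.cpt_sum]

/-- Away from null worlds, `P_{do(X)}(Y | U = u)` is a plain sum: the exogenous factor
cancels between numerator and denominator, and what remains of the denominator is `1`.
If `w` is null the quotient may be the junk value `0 / 0`, hence the hypothesis `hw`. -/
theorem cfBasic_eq (N : CM ν Val) (hN : N.WF) (X Y : Finset ν) (xv yv w : Asg Val)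
    (hX : Disjoint X N.exo) (hw : N.joint w ≠ 0) :
    N.cfBasic X xv Y yv w = ∑ w' : Asg Val,
      if agree N.exo w' w ∧ agree X w' xv ∧ agree Y w' yv then
        ∏ i, (if i ∈ N.exo ∨ i ∈ X then 1 else N.cpt i w' (w' i)) else 0 := by
  set c : ℝ := ∏ i ∈ N.exo, N.cpt i w (w i) with hc
  have hc0 : c ≠ 0 := by
    intro h0
    obtain ⟨i, _, hi⟩ := Finset.prod_eq_zero_iff.1 h0
    exact hw (Finset.prod_eq_zero (mem_univ i) hi)
  have hpdo : ∀ w' : Asg Val, agree N.exo w' w → N.pdo X xv w' =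
      c * if agree X w' xv then ∏ i ∈ (N.exo ∪ X)ᶜ, N.cpt i w' (w' i) else 0 := by
    intro w' h'
    have hsplit : Xᶜ = N.exo ∪ (N.exo ∪ X)ᶜ := by
      ext i
      have : i ∈ X → i ∉ N.exo := fun h => Finset.disjoint_left.1 hX h
      simp only [mem_compl, mem_union]
      tauto
    have hdis : Disjoint N.exo (N.exo ∪ X)ᶜ := by
      rw [Finset.disjoint_left]; intro i hi; simp [hi]
    by_cases hx : agree X w' xv
    · rw [pdo, if_pos hx, if_pos hx, hsplit, Finset.prod_union hdis]
      congr 1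
      refine Finset.prod_congr rfl fun i hi => ?_
      rw [h' i hi]
      refine hN.cpt_pa i _ _ _ ?_
      simp [hN.pa_exo i hi]
    · rw [pdo, if_neg hx, if_neg hx, mul_zero]
  have hprod : ∀ w' : Asg Val, ∏ i ∈ (N.exo ∪ X)ᶜ, N.cpt i w' (w' i) =
      ∏ i, (if i ∈ N.exo ∨ i ∈ X then 1 else N.cpt i w' (w' i)) := by
    intro w'
    rw [← Finset.prod_subset (Finset.subset_univ (N.exo ∪ X)ᶜ)]
    · refine Finset.prod_congr rfl fun i hi => ?_
      rw [if_neg (by simpa using hi)]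
    · intro i _ hi
      rw [if_pos (by simpa [-not_or, or_iff_not_imp_left] using hi)]
  have hden : (∑ w' : Asg Val, if ∀ i ∈ N.exo, w' i = w i then N.pdo X xv w' else 0) = c := by
    -- the assignment prescribing `w` on the exogenous variables and `xv` on `X`
    have h1 := N.sum_truncated_eq_one hN _ (N.exo ∪ X) (fun i => if i ∈ X then xv i else w i) rfl
    rw [← mul_one c, ← h1, Finset.mul_sum]
    refine Finset.sum_congr rfl fun w' _ => ?_
    have hiff : agree (N.exo ∪ X) w' (fun i => if i ∈ X then xv i else w i) ↔
        agree N.exo w' w ∧ agree X w' xv := by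
      constructor
      · intro h
        refine ⟨fun i hi => ?_, fun i hi => ?_⟩
        · simpa [Finset.disjoint_right.1 hX hi] using h i (mem_union_left _ hi)
        · simpa [hi] using h i (mem_union_right _ hi)
      · rintro ⟨h1, h2⟩ i hi
        by_cases hiX : i ∈ X
        · simpa [hiX] using h2 i hiX
        · simpa [hiX] using h1 i (by simpa [hiX] using hi)
    by_cases he : agree N.exo w' w
    · rw [if_pos he, hpdo w' he]
      by_cases hx : agree X w' xv
      · rw [if_pos hx, if_pos (hiff.2 ⟨he, hx⟩)]
      · rw [if_neg hx, if_neg fun h => hx (hiff.1 h).2]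
    · rw [if_neg he, if_neg fun h => he (hiff.1 h).1, mul_zero]
  rw [cfBasic, hden, div_eq_iff hc0, mul_comm, Finset.mul_sum]
  refine Finset.sum_congr rfl fun w' _ => ?_
  by_cases he : agree N.exo w' w
  · by_cases hy : agree Y w' yv
    · rw [if_pos ⟨he, hy⟩, hpdo w' he, hprod]
      by_cases hx : agree X w' xv
      · rw [if_pos hx, if_pos ⟨he, hx, hy⟩]
      · rw [if_neg hx, if_neg fun h => hx h.2.1]
    · rw [if_neg fun h => hy h.2, if_neg fun h => hy h.2.2, mul_zero]
  · rw [if_neg fun h => he h.1, if_neg fun h => he h.1, mul_zero]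

theorem refine_wf (M : CM ν Val) (hM : M.WF) (a : Asg Val) : (M.refine a).WF where
  pa_exo := hM.pa_exo
  acyclic := hM.acyclic
  cpt_pa := by
    intro i w w' x h
    have hiff : (i ∉ M.exo ∧ ∀ j ∈ M.pa i, w j = a j) ↔
        (i ∉ M.exo ∧ ∀ j ∈ M.pa i, w' j = a j) :=
      and_congr_right fun _ => forall₂_congr fun j hj => by rw [h j hj]
    simp only [refine]
    rw [hM.cpt_pa i w w' x h]
    by_cases hc : (i ∉ M.exo ∧ ∀ j ∈ M.pa i, w j = a j)
    · rw [if_pos hc, if_pos (hiff.1 hc)]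
    · rw [if_neg hc, if_neg fun h => hc (hiff.2 h)]
  cpt_nonneg := by
    intro i w x
    have := hM.cpt_nonneg i w x
    simp only [refine]
    split_ifs <;> simp [this]
  cpt_sum := by
    intro i w
    simp only [refine]
    split_ifs
    · simp
    · exact hM.cpt_sum i w

/-! ### The PO-SCM -/

/-- The assignment of the extended signature with original part `w` and potential
outcomes `f`. -/
def mkW (M : CM ν Val) (w : Asg Val) (f : (p : POI M) → POB M p) : Asg (SumVal Val (POB M)) :=
  fun i => match i with
  | .inl j => w j
  | .inr p => f p

/-- The values that `w` gives to the parents of `i`. -/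
def restr (M : CM ν Val) (i : ν) (w : Asg Val) : M.PaAsg i := fun k => w k.1

theorem restr_eq_iff (M : CM ν Val) (i : ν) (w w' : Asg Val) :
    M.restr i w = M.restr i w' ↔ ∀ j ∈ M.pa i, w j = w' j :=
  ⟨fun h j hj => congrFun h ⟨j, hj⟩, fun h => funext fun k => h k.1 k.2⟩

/-- The potential outcome of the endogenous variable `i` under `f` at the parent values
prescribed by `w`. -/
def outcome (M : CM ν Val) (f : (p : POI M) → POB M p) (i : ν) (h : i ∉ M.exo)
    (w : Asg Val) : Val i := f ⟨⟨i, h⟩, M.restr i w⟩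

theorem exists_mkW (M : CM ν Val) (W : Asg (SumVal Val (POB M))) :
    ∃ w f, W = M.mkW w f :=
  ⟨fun k => W (Sum.inl k), fun p => W (Sum.inr p), by funext i; cases i <;> rfl⟩

theorem MN_cpt_inl (M : CM ν Val) (w : Asg Val) (f : (p : POI M) → POB M p) (j : ν) (x : Val j) :
    M.MN.cpt (Sum.inl j) (M.mkW w f) x =
      if h : j ∈ M.exo then M.cpt j w x else if x = M.outcome f j h w then 1 else 0 := rfl

theorem outcome_congr (M : CM ν Val) (f f' : (p : POI M) → POB M p) (i : ν) (h : i ∉ M.exo)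
    (w w' : Asg Val) (hw : ∀ j ∈ M.pa i, w j = w' j) (hf : ∀ p : POI M, p.1.1 = i → f p = f' p) :
    M.outcome f i h w = M.outcome f' i h w' := by
  unfold outcome
  rw [(M.restr_eq_iff i w w').2 hw]
  exact hf _ rfl

theorem MN_wf (M : CM ν Val) (hM : M.WF) : M.MN.WF where
  pa_exo := by
    rintro (i | p) hi
    · have hi' : i ∈ M.exo := by simpa [MN] using hi
      have : ∀ p : POI M, p.1.1 ≠ i := fun p h => p.1.2 (h ▸ hi')
      simp [MN, hM.pa_exo i hi', this]
    · rfl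
  acyclic := by
    rintro (i | p) (j | q) h
    · have h' : j ∈ M.pa i := by simpa [MN] using h
      simpa [MN] using hM.acyclic i j h'
    · simp [MN]
    · simp [MN] at h
    · simp [MN] at h
  cpt_pa := by
    rintro (i | p) W W' x h
    · obtain ⟨w, f, rfl⟩ := M.exists_mkW W
      obtain ⟨w', f', rfl⟩ := M.exists_mkW W'
      have h1 : ∀ j ∈ M.pa i, w j = w' j :=
        fun j hj => h (Sum.inl j) (by simp [MN, hj])
      have h2 : ∀ p : POI M, p.1.1 = i → f p = f' p :=
        fun p hp => h (Sum.inr p) (by simp [MN, hp])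
      refine (M.MN_cpt_inl w f i x).trans (Eq.trans ?_ (M.MN_cpt_inl w' f' i x).symm)
      by_cases hi : i ∈ M.exo
      · rw [dif_pos hi, dif_pos hi]
        exact hM.cpt_pa i _ _ _ h1
      · rw [dif_neg hi, dif_neg hi, M.outcome_congr f f' i hi w w' h1 h2]
    · rfl
  cpt_nonneg := by
    rintro (i | p) w x
    · simp only [MN]
      split_ifs
      · exact hM.cpt_nonneg _ _ _
      · exact zero_le_one
      · exact le_rfl
    · exact hM.cpt_nonneg _ _ _
  cpt_sum := by
    rintro (i | p) W
    · obtain ⟨w, f, rfl⟩ := M.exists_mkW W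
      refine Eq.trans (b := ∑ x : Val i, if h : i ∈ M.exo then M.cpt i w x else
        if x = M.outcome f i h w then 1 else 0) rfl ?_
      by_cases hi : i ∈ M.exo
      · simp only [hi, dif_pos]
        exact hM.cpt_sum i _
      · simp [hi]
    · exact hM.cpt_sum _ _

/-- The probability of the potential outcome assignment `f` in the PO-SCM. -/
def poWeight (M : CM ν Val) (f : (p : POI M) → POB M p) : ℝ :=
  ∏ p : POI M, M.cpt p.1.1 (M.extendPa p.1.1 p.2) (f p)

/-- The `Fintype` instance is left free so that the lemma applies whichever decidability
instance on the extended index type it was built from. -/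
theorem sum_mkW (M : CM ν Val) {inst : Fintype (Asg (SumVal Val (POB M)))}
    (F : Asg (SumVal Val (POB M)) → ℝ) :
    ∑ W, F W = ∑ w : Asg Val, ∑ f : (p : POI M) → POB M p, F (M.mkW w f) := by
  let e : Asg Val × ((p : POI M) → POB M p) ≃ Asg (SumVal Val (POB M)) :=
    { toFun := fun q => M.mkW q.1 q.2
      invFun := fun W => (fun k => W (Sum.inl k), fun p => W (Sum.inr p))
      left_inv := fun _ => rfl
      right_inv := fun W => by funext i; cases i <;> rfl }
  rw [← e.sum_comp, Fintype.sum_prod_type]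
  rfl

theorem MN_joint (M : CM ν Val) (w : Asg Val) (f : (p : POI M) → POB M p) :
    M.MN.joint (M.mkW w f) =
      (∏ i, if h : i ∈ M.exo then M.cpt i w (w i) else
        if w i = M.outcome f i h w then 1 else 0) * M.poWeight f := by
  rw [joint, Fintype.prod_sum_type]
  rfl

/-- `P((Y = y)_{X ← x})` in the PO-SCM, given the exogenous values of `w` and the potential
outcomes `f`, as the sum over all `w'` of the indicator that `w'` solves the structural
equations other than that of `X`. -/
def poEval (M : CM ν Val) (X Y : ν) (x : Val X) (y : Val Y) (w : Asg Val)
    (f : (p : POI M) → POB M p) : ℝ :=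
  ∑ w' : Asg Val, if agree M.exo w' w ∧ w' X = x ∧ w' Y = y then
    ∏ i, (if h : i ∈ M.exo then 1 else if i = X then 1 else
      if w' i = M.outcome f i h w' then 1 else 0) else 0

/-- `P^B((Y = y)_{X ← x} | w)`, written without a quotient. -/
def bEval (M : CM ν Val) (X Y : ν) (x : Val X) (y : Val Y) (w : Asg Val) : ℝ :=
  ∑ w' : Asg Val, if agree M.exo w' w ∧ w' X = x ∧ w' Y = y then
    ∏ i, (if i ∈ M.exo then 1 else if i = X then 1 else (M.refine w).cpt i w' (w' i)) else 0

theorem refine_joint_ne_zero (M : CM ν Val) (w : Asg Val) (hw : M.joint w ≠ 0) :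
    (M.refine w).joint w ≠ 0 := by
  rw [joint, Finset.prod_ne_zero_iff] at hw ⊢
  intro i hi
  simp only [refine]
  split_ifs
  · exact one_ne_zero
  · exact hw i hi

theorem pbBasic_eq (M : CM ν Val) (hM : M.WF) (X Y : ν) (hX : X ∉ M.exo) (x : Val X) (y : Val Y)
    (a b w : Asg Val) (hw : M.joint w ≠ 0) :
    M.pbBasic w {X} (Function.update a X x) {Y} (Function.update b Y y) = M.bEval X Y x y w := by
  rw [pbBasic, cfBasic_eq _ (M.refine_wf hM w) _ _ _ _ _
    (Finset.disjoint_singleton_left.2 hX)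
    (M.refine_joint_ne_zero w hw), bEval]
  refine Finset.sum_congr rfl fun w' _ => ?_
  have hcond : (agree M.exo w' w ∧ agree {X} w' (Function.update a X x) ∧
      agree {Y} w' (Function.update b Y y)) ↔ (agree M.exo w' w ∧ w' X = x ∧ w' Y = y) := by
    simp [agree]
  refine if_congr hcond (Finset.prod_congr rfl fun i _ => ?_) rfl
  change (if i ∈ M.exo ∨ i ∈ ({X} : Finset ν) then 1 else (M.refine w).cpt i w' (w' i)) = _
  by_cases hi : i ∈ M.exo
  · rw [if_pos hi, if_pos (Or.inl hi)]
  · by_cases hiX : i = X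
    · rw [if_neg hi, if_pos hiX, if_pos (Or.inr (by simpa using hiX))]
    · rw [if_neg hi, if_neg hiX, if_neg]
      rintro (h | h)
      · exact hi h
      · exact hiX (by simpa using h)

theorem MN_cfBasic_eq (M : CM ν Val) (hM : M.WF) (X Y : ν) (hX : X ∉ M.exo) (x : Val X) (y : Val Y)
    (a b w : Asg Val) (f : (p : POI M) → POB M p) (hw : M.MN.joint (M.mkW w f) ≠ 0) :
    M.MN.cfBasic (({X} : Finset ν).image Sum.inl) (liftAsg (Function.update a X x))
      (({Y} : Finset ν).image Sum.inl) (liftAsg (Function.update b Y y)) (M.mkW w f) =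
      M.poEval X Y x y w f := by
  rw [cfBasic_eq _ (M.MN_wf hM) _ _ _ _ _ (by simpa [MN] using hX) hw, sum_mkW, poEval]
  refine Finset.sum_congr rfl fun w' _ => ?_
  have hcond : ∀ g : (p : POI M) → POB M p,
      (agree M.MN.exo (M.mkW w' g) (M.mkW w f) ∧
        agree (({X} : Finset ν).image Sum.inl) (M.mkW w' g) (liftAsg (Function.update a X x)) ∧
        agree (({Y} : Finset ν).image Sum.inl) (M.mkW w' g) (liftAsg (Function.update b Y y))) ↔
      (g = f ∧ agree M.exo w' w ∧ w' X = x ∧ w' Y = y) := by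
    intro g
    have e1 : agree M.MN.exo (M.mkW w' g) (M.mkW w f) ↔ g = f ∧ agree M.exo w' w := by
      constructor
      · intro h
        exact ⟨funext fun p => h (Sum.inr p) (by simp [MN]),
          fun i hi => h (Sum.inl i) (by simp [MN, hi])⟩
      · rintro ⟨rfl, h⟩ (i | p) hi
        · exact h i (by simpa [MN] using hi)
        · rfl
    have e2 : ∀ (Z : ν) (c : Asg Val) (z : Val Z),
        agree (({Z} : Finset ν).image Sum.inl) (M.mkW w' g) (liftAsg (Function.update c Z z)) ↔
          w' Z = z := by
      intro Z c z
      have : (liftAsg (Function.update c Z z) : Asg (SumVal Val (POB M))) (Sum.inl Z) = z :=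
        Function.update_self Z z c
      constructor
      · intro h
        exact (h (Sum.inl Z) (by simp)).trans this
      · intro h i hi
        obtain rfl : Sum.inl Z = i := by simpa [eq_comm] using hi
        exact Eq.trans h this.symm
    rw [e1, e2, e2, and_assoc]
  rw [Finset.sum_eq_single f]
  · by_cases hc : agree M.exo w' w ∧ w' X = x ∧ w' Y = y
    · rw [if_pos hc, if_pos ((hcond f).2 ⟨rfl, hc⟩)]
      rw [Fintype.prod_sum_type, Finset.prod_eq_one (s := (univ : Finset (POI M))), mul_one]
      · refine Finset.prod_congr rfl fun i _ => ?_
        by_cases hi : i ∈ M.exo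
        · rw [if_pos (Or.inl (by simpa [MN] using hi)), dif_pos hi]
        · rw [dif_neg hi]
          by_cases hiX : i = X
          · rw [if_pos hiX, if_pos (Or.inr (by simpa using hiX))]
          · rw [if_neg hiX, if_neg]
            · exact (M.MN_cpt_inl w' f i (w' i)).trans (dif_neg hi)
            · rintro (h | h)
              · exact hi (by simpa [MN] using h)
              · exact hiX (by simpa [eq_comm] using h)
      · intro p _
        rw [if_pos (Or.inl (by simp [MN]))]
    · rw [if_neg hc, if_neg fun h => hc ((hcond f).1 h).2]
  · intro g _ hg
    rw [if_neg fun h => hg ((hcond g).1 h).1]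
  · simp

/-! ### Consistency -/

/-- Abstract form of consistency. Suppose each factor `T i` reduces, once the parents of `i`
have the values they have in `w`, to the indicator that `i` too has its value in `w`. Then `w`
is the only assignment agreeing with `w` on `X` and the exogenous variables whose product of
factors is nonzero: a variable of minimal order where another assignment deviates gives a
vanishing factor. -/
theorem sum_eq_indicator (M : CM ν Val) (hM : M.WF) (X Y : ν) (y : Val Y) (w : Asg Val)
    (T : ν → Asg Val → ℝ)
    (hT : ∀ i w', (∀ j ∈ M.pa i, w' j = w j) → T i w' = if i ∈ M.exo then 1 else
      if i = X then 1 else if w' i = w i then 1 else 0) :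
    (∑ w' : Asg Val, if agree M.exo w' w ∧ w' X = w X ∧ w' Y = y then ∏ i, T i w' else 0) =
      if w Y = y then 1 else 0 := by
  rw [Finset.sum_eq_single w]
  · have : ∏ i, T i w = 1 := Finset.prod_eq_one fun i _ => by
      rw [hT i w fun _ _ => rfl]; simp
    rw [this]
    exact if_congr (by simp [agree]) rfl rfl
  · intro w' _ hne
    split_ifs with h
    · have hne' : (univ.filter fun i => w' i ≠ w i).Nonempty := by
        obtain ⟨i, hi⟩ := Function.ne_iff.1 hne
        exact ⟨i, by simpa using hi⟩
      obtain ⟨i, hi, hmin⟩ := Finset.exists_min_image _ M.ord hne'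
      have hi' : w' i ≠ w i := by simpa using hi
      refine Finset.prod_eq_zero (mem_univ i) ?_
      rw [hT i w', if_neg fun he => hi' (h.1 i he), if_neg, if_neg hi']
      · rintro rfl
        exact hi' h.2.1
      · intro j hj
        by_contra hjne
        have := hmin j (by simpa using hjne)
        have := hM.acyclic i j hj
        omega
    · rfl
  · simp

/-- Consistency for the B-semantics: intervening to set `X` to its actual value changes
nothing. -/
theorem bEval_consistent (M : CM ν Val) (hM : M.WF) (X Y : ν) (y : Val Y) (w : Asg Val) :
    M.bEval X Y (w X) y w = if w Y = y then 1 else 0 := by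
  refine M.sum_eq_indicator hM X Y y w
    (fun i w' => if i ∈ M.exo then 1 else if i = X then 1 else (M.refine w).cpt i w' (w' i)) ?_
  intro i w' h
  by_cases hi : i ∈ M.exo
  · simp [hi]
  · simp only [refine]
    rw [if_pos (⟨hi, h⟩ : i ∉ M.exo ∧ ∀ j ∈ M.pa i, w' j = w j)]

/-- Consistency in the PO-SCM: if the world `(w, f)` has positive probability, then `w` solves
the structural equations given by `f`, and setting `X` to its actual value changes nothing. -/
theorem poEval_consistent (M : CM ν Val) (hM : M.WF) (X Y : ν) (y : Val Y) (w : Asg Val)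
    (f : (p : POI M) → POB M p) (hw : M.MN.joint (M.mkW w f) ≠ 0) :
    M.poEval X Y (w X) y w f = if w Y = y then 1 else 0 := by
  have hout : ∀ i (hi : i ∉ M.exo), w i = M.outcome f i hi w := by
    intro i hi
    by_contra hne
    refine hw ?_
    rw [MN_joint, Finset.prod_eq_zero (mem_univ i), zero_mul]
    rw [dif_neg hi, if_neg hne]
  refine M.sum_eq_indicator hM X Y y w
    (fun i w' => if h : i ∈ M.exo then 1 else if i = X then 1 else
      if w' i = M.outcome f i h w' then 1 else 0) ?_
  intro i w' h
  by_cases hi : i ∈ M.exo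
  · simp [hi]
  · simp only [hi, dif_neg, not_false_eq_true, if_false]
    rw [M.outcome_congr f f i hi w' w h fun _ _ => rfl, ← hout i hi]

/-! ### Averaging over the potential outcomes -/

/-- The contribution of the potential outcomes of one endogenous variable `i`: the probability
that the outcome at the parent values of `w` is `w i` and, unless `i = X`, the one at the parent
values of `w'` is `w' i`. If the two parent values differ, the outcomes are independent; if they
agree, both conditions concern the same outcome. This is exactly the table of `w` times the table
of the refinement at `w`. -/
theorem prod_sum_local (M : CM ν Val) (hM : M.WF) (i : ν) (hi : i ∉ M.exo) (X : ν)
    (w w' : Asg Val) :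
    (∏ κ : M.PaAsg i, ∑ v : Val i, M.cpt i (M.extendPa i κ) v *
        (if κ = M.restr i w then if w i = v then 1 else 0 else 1) *
        (if i ≠ X ∧ κ = M.restr i w' then if w' i = v then 1 else 0 else 1)) =
      M.cpt i w (w i) * if i = X then 1 else (M.refine w).cpt i w' (w' i) := by
  have hcpt : ∀ (a : Asg Val) (v : Val i), M.cpt i (M.extendPa i (M.restr i a)) v = M.cpt i a v := by
    intro a v
    refine hM.cpt_pa i _ _ _ fun j hj => ?_
    simp [extendPa, restr, hj]
  have hsum : ∀ κ : M.PaAsg i, ∑ v : Val i, M.cpt i (M.extendPa i κ) v = 1 :=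
    fun κ => hM.cpt_sum i _
  -- Only the outcomes at the two relevant parent values contribute; if these coincide, the
  -- whole contribution is recorded in the first factor.
  have hfac : ∀ κ : M.PaAsg i, (∑ v : Val i, M.cpt i (M.extendPa i κ) v *
        (if κ = M.restr i w then if w i = v then 1 else 0 else 1) *
        (if i ≠ X ∧ κ = M.restr i w' then if w' i = v then 1 else 0 else 1)) =
      (if κ = M.restr i w then M.cpt i w (w i) *
        (if i ≠ X ∧ M.restr i w = M.restr i w' then if w' i = w i then 1 else 0 else 1) else 1) *
      (if κ = M.restr i w' then
        (if i ≠ X ∧ M.restr i w ≠ M.restr i w' then M.cpt i w' (w' i) else 1) else 1) := by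
    intro κ
    by_cases hX : i = X
    · by_cases h1 : κ = M.restr i w
      · subst h1
        simp [hX.symm, hcpt]
      · simp [hX, h1, hsum]
    · by_cases h1 : κ = M.restr i w
      · subst h1
        by_cases h2 : M.restr i w = M.restr i w'
        · have e := hcpt w (w i)
          rw [h2, hcpt] at e
          by_cases h3 : w i = w' i
          · rw [← h3] at *
            simp [hX, h2, hcpt, e]
          · simp [hX, h2, hcpt, h3, Ne.symm h3]
        · simp [hX, h2, hcpt]
      · by_cases h2 : κ = M.restr i w'
        · subst h2
          simp [hX, h1, hcpt, Ne.symm h1]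
        · simp [hX, h1, h2, hsum]
  rw [Finset.prod_congr rfl fun κ _ => hfac κ, Finset.prod_mul_distrib,
    Finset.prod_ite_eq' , Finset.prod_ite_eq', if_pos (mem_univ _), if_pos (mem_univ _), mul_assoc]
  congr 1
  by_cases hX : i = X
  · simp [hX]
  · by_cases h2 : M.restr i w = M.restr i w'
    · have := (M.restr_eq_iff i w' w).1 h2.symm
      simp only [refine]
      rw [if_pos (⟨hi, this⟩ : i ∉ M.exo ∧ ∀ j ∈ M.pa i, w' j = w j)]
      simp [hX, h2]
    · have : ¬ (i ∉ M.exo ∧ ∀ j ∈ M.pa i, w' j = w j) :=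
        fun h => h2 ((M.restr_eq_iff i w' w).2 h.2).symm
      simp only [refine]
      rw [if_neg this]
      simp [hX, h2]

theorem prod_endo (M : CM ν Val) (g : ν → ℝ) (hg : ∀ i ∈ M.exo, g i = 1) :
    ∏ i, g i = ∏ i : {i : ν // i ∉ M.exo}, g i.1 := by
  rw [← Finset.prod_subset (Finset.subset_univ (univ.filter fun i => i ∉ M.exo))
    fun i _ hi => hg i (by simpa using hi)]
  exact Finset.prod_subtype _ (by simp) _

theorem prod_POI (M : CM ν Val) (g : POI M → ℝ) :
    ∏ p : POI M, g p = ∏ i : {i : ν // i ∉ M.exo}, ∏ κ : M.PaAsg i.1, g ⟨i, κ⟩ :=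
  Fintype.prod_sigma g

/-- For actual world `w` and counterfactual world `w'`, averaging over the independent potential
outcomes turns the structural equations of both worlds into the tables of the actualized
refinement. -/
theorem sum_po (M : CM ν Val) (hM : M.WF) (X : ν) (w w' : Asg Val) :
    (∑ f : (p : POI M) → POB M p,
      (∏ i, (if h : i ∈ M.exo then (1 : ℝ) else if i = X then 1 else
        if w' i = M.outcome f i h w' then 1 else 0)) * M.MN.joint (M.mkW w f)) =
    (∏ i, (if i ∈ M.exo then 1 else if i = X then 1 else (M.refine w).cpt i w' (w' i))) *
      M.joint w := by
  -- the exogenous part of the joint distribution, which is a constant of the sum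
  set c : ℝ := ∏ i, if i ∈ M.exo then M.cpt i w (w i) else 1 with hc
  have hjoint : M.joint w = c * ∏ i : {i : ν // i ∉ M.exo}, M.cpt i.1 w (w i.1) := by
    have : ∏ i : {i : ν // i ∉ M.exo}, M.cpt i.1 w (w i.1) =
        ∏ i, if i ∈ M.exo then 1 else M.cpt i w (w i) := by
      rw [M.prod_endo _ fun i hi => if_pos hi]
      exact Finset.prod_congr rfl fun i _ => (if_neg i.2).symm
    rw [this, hc, ← Finset.prod_mul_distrib, joint]
    refine Finset.prod_congr rfl fun i _ => ?_
    split_ifs <;> simp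
  let h : (p : POI M) → POB M p → ℝ := fun p v => M.cpt p.1.1 (M.extendPa p.1.1 p.2) v *
        (if p.2 = M.restr p.1.1 w then if w p.1.1 = v then 1 else 0 else 1) *
        (if p.1.1 ≠ X ∧ p.2 = M.restr p.1.1 w' then if w' p.1.1 = v then 1 else 0 else 1)
  have hterm : ∀ f : (p : POI M) → POB M p,
      (∏ i, (if h : i ∈ M.exo then (1 : ℝ) else if i = X then 1 else
        if w' i = M.outcome f i h w' then 1 else 0)) * M.MN.joint (M.mkW w f) =
      c * ∏ p, h p (f p) := by
    intro f
    have h1 : (∏ i, if h : i ∈ M.exo then M.cpt i w (w i) else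
        if w i = M.outcome f i h w then 1 else 0) = c *
        ∏ p : POI M, (if p.2 = M.restr p.1.1 w then if w p.1.1 = f p then 1 else 0 else 1) := by
      rw [M.prod_POI]
      simp only [Finset.prod_ite_eq', mem_univ, if_true]
      have hall : (∏ i : {i : ν // i ∉ M.exo},
          if w i.1 = f ⟨i, M.restr i.1 w⟩ then (1 : ℝ) else 0) =
          ∏ i, if h : i ∈ M.exo then 1 else if w i = M.outcome f i h w then 1 else 0 := by
        rw [M.prod_endo _ fun i hi => dif_pos hi]
        refine Finset.prod_congr rfl fun i _ => ?_
        rw [dif_neg i.2]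
        rfl
      rw [hall, hc, ← Finset.prod_mul_distrib]
      refine Finset.prod_congr rfl fun i _ => ?_
      split_ifs <;> simp
    have h2 : (∏ i, if h : i ∈ M.exo then (1 : ℝ) else if i = X then 1 else
        if w' i = M.outcome f i h w' then 1 else 0) =
        ∏ p : POI M, (if p.1.1 ≠ X ∧ p.2 = M.restr p.1.1 w' then
          if w' p.1.1 = f p then 1 else 0 else 1) := by
      rw [M.prod_POI,
        M.prod_endo _ fun i hi => dif_pos hi]
      refine Finset.prod_congr rfl fun i _ => ?_
      rw [dif_neg i.2]
      by_cases hX : i.1 = X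
      · simp [hX]
      · simp only [hX, ne_eq, not_false_eq_true, true_and, if_false, Finset.prod_ite_eq',
          mem_univ, if_true]
        rfl
    rw [MN_joint, h1, h2, poWeight]
    simp only [h, Finset.prod_mul_distrib]
    ring
  rw [Finset.sum_congr rfl fun f _ => hterm f, ← Finset.mul_sum]
  have hswap : ∑ f : (p : POI M) → POB M p, ∏ p, h p (f p) = ∏ p, ∑ v, h p v := by
    rw [Finset.prod_univ_sum, Fintype.piFinset_univ]
  rw [hswap, hjoint]
  have hloc : ∏ p : POI M, ∑ v : POB M p, h p v = ∏ i : {i : ν // i ∉ M.exo},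
      (M.cpt i.1 w (w i.1) * if i.1 = X then 1 else (M.refine w).cpt i.1 w' (w' i.1)) := by
    refine (M.prod_POI fun p => ∑ v : POB M p, h p v).trans ?_
    exact Finset.prod_congr rfl fun i _ => M.prod_sum_local hM i.1 i.2 X w w'
  rw [hloc, Finset.prod_mul_distrib, M.prod_endo (fun i => if i ∈ M.exo then 1 else
    if i = X then 1 else (M.refine w).cpt i w' (w' i)) fun i hi => if_pos hi,
    Finset.prod_congr rfl fun (i : {i : ν // i ∉ M.exo}) _ => if_neg i.2]
  ring

/-- The PO-SCM and the B-semantics agree on basic counterfactuals jointly with the actual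
values of all original variables. -/
theorem sum_poEval (M : CM ν Val) (hM : M.WF) (X Y : ν) (x : Val X) (y : Val Y) (w : Asg Val) :
    (∑ f : (p : POI M) → POB M p, M.poEval X Y x y w f * M.MN.joint (M.mkW w f)) =
      M.bEval X Y x y w * M.joint w := by
  simp only [poEval, bEval, Finset.sum_mul]
  rw [Finset.sum_comm]
  refine Finset.sum_congr rfl fun w' _ => ?_
  split_ifs
  · exact M.sum_po hM X w w'
  · simp

end CM

/-- **Proposition 3 (PNS).** Given a causal model `M` and any two binary endogenous
variables `X, Y ∈ V` (with two values, `0` and `1`): the Probability of Necessity and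
Sufficiency computed via the B-semantics equals the one computed in the PO-SCM, i.e.
`PNS^B = P^B((Y=1)_{X←1}, (Y=0)_{X←0}) = P^N((Y=1)_{X←1}, (Y=0)_{X←0}) = PNS^N`. -/
theorem PNS_B_eq_PNS_N
    {ν : Type} {Val : ν → Type} [Fintype ν] [∀ i, Fintype (Val i)] [∀ i, Nonempty (Val i)]
    (M : CM ν Val) (hM : M.WF)
    (X Y : ν) (hX : X ∉ M.exo) (hY : Y ∉ M.exo) (hXY : X ≠ Y)
    (x0 x1 : Val X) (hx : x0 ≠ x1) (hxbin : ∀ v : Val X, v = x0 ∨ v = x1)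
    (y0 y1 : Val Y) (hy : y0 ≠ y1) (hybin : ∀ v : Val Y, v = y0 ∨ v = y1) :
    M.pbProb [⟨{X}, Function.update (dfltAsg Val) X x1, {Y}, Function.update (dfltAsg Val) Y y1⟩,
              ⟨{X}, Function.update (dfltAsg Val) X x0, {Y}, Function.update (dfltAsg Val) Y y0⟩]
    = M.pnProb [⟨{X}, Function.update (dfltAsg Val) X x1, {Y}, Function.update (dfltAsg Val) Y y1⟩,
                ⟨{X}, Function.update (dfltAsg Val) X x0, {Y}, Function.update (dfltAsg Val) Y y0⟩] := by
  have hB : ∀ w, M.pbBasic w {X} (Function.update (dfltAsg Val) X x1) {Y}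
        (Function.update (dfltAsg Val) Y y1) *
      M.pbBasic w {X} (Function.update (dfltAsg Val) X x0) {Y}
        (Function.update (dfltAsg Val) Y y0) * M.joint w =
      M.bEval X Y x1 y1 w * M.bEval X Y x0 y0 w * M.joint w := by
    intro w
    by_cases hw : M.joint w = 0
    · rw [hw, mul_zero, mul_zero]
    · rw [M.pbBasic_eq hM X Y hX x1 y1 _ _ w hw, M.pbBasic_eq hM X Y hX x0 y0 _ _ w hw]
  have hN : ∀ w f, M.MN.cfBasic (({X} : Finset ν).image Sum.inl)
        (liftAsg (Function.update (dfltAsg Val) X x1)) (({Y} : Finset ν).image Sum.inl)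
        (liftAsg (Function.update (dfltAsg Val) Y y1)) (M.mkW w f) *
      M.MN.cfBasic (({X} : Finset ν).image Sum.inl)
        (liftAsg (Function.update (dfltAsg Val) X x0)) (({Y} : Finset ν).image Sum.inl)
        (liftAsg (Function.update (dfltAsg Val) Y y0)) (M.mkW w f) * M.MN.joint (M.mkW w f) =
      M.poEval X Y x1 y1 w f * M.poEval X Y x0 y0 w f * M.MN.joint (M.mkW w f) := by
    intro w f
    by_cases hw : M.MN.joint (M.mkW w f) = 0
    · rw [hw, mul_zero, mul_zero]
    · rw [M.MN_cfBasic_eq hM X Y hX x1 y1 _ _ w f hw, M.MN_cfBasic_eq hM X Y hX x0 y0 _ _ w f hw]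
  have hcons : ∀ w f (y : Val Y), M.poEval X Y (w X) y w f * M.MN.joint (M.mkW w f) =
      (if w Y = y then 1 else 0) * M.MN.joint (M.mkW w f) := by
    intro w f y
    by_cases hw : M.MN.joint (M.mkW w f) = 0
    · rw [hw, mul_zero, mul_zero]
    · rw [M.poEval_consistent hM X Y y w f hw]
  simp only [CM.pbProb, CM.pnProb, extProb, CM.cfProb, List.map_cons, List.map_nil,
    List.prod_cons, List.prod_nil, mul_one, liftCFEvent]
  rw [M.sum_mkW fun W => M.MN.cfBasic _ _ _ _ W * M.MN.cfBasic _ _ _ _ W * M.MN.joint W]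
  refine Finset.sum_congr rfl fun w _ => ?_
  rw [hB, Finset.sum_congr rfl fun f _ => hN w f]
  -- By consistency, the conjunct whose antecedent is the actual value of `X` is the indicator
  -- of an event determined by `w`.
  rcases hxbin (w X) with rfl | rfl
  · rw [M.bEval_consistent hM, mul_right_comm, ← M.sum_poEval hM, Finset.sum_mul]
    refine Finset.sum_congr rfl fun f _ => ?_
    linear_combination -M.poEval X Y x1 y1 w f * hcons w f y0
  · rw [M.bEval_consistent hM, mul_assoc, ← M.sum_poEval hM, Finset.mul_sum]
    refine Finset.sum_congr rfl fun f _ => ?_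
    rw [mul_right_comm, hcons]
    ring

end
end

section
/- For every causal model M and all counterfactual events y_x, …, z_w with Y, X, …, Z, W ⊆ V: the probability of the complex counterfactual computed in the GH-SCM equals the one computed in the PO-SCM: P^GH(y_x, …, z_w) = P^N(y_x, …, z_w). -/
/-!
A value of the response variable `U_X` is a function `f_X : R(Pa_X) → R(X)`, which is the same
data as one value for each potential outcome variable `X_{pa_X}`. Currying therefore gives a
bijection `transfer` between the worlds of the GH-SCM and those of the PO-SCM. It fixes the original
variables and turns the equation `X = f_X(Pa_X)` into `X = X_{pa_X}`. The defining product
formula of the GH distribution says precisely that the weight of `f_X` is the product of the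
weights of the corresponding potential outcomes. Hence the joint distribution and every
interventional distribution on original variables correspond (`joint_transfer`,
`pdo_transfer`), the conditional probabilities of basic counterfactuals agree world by world
(`cfBasic_transfer`), and the two sums defining the complex counterfactual agree by reindexing.
-/


open Finset

noncomputable section

attribute [local instance] Classical.propDecidable

namespace CM

variable {ν : Type} {Val : ν → Type} [Fintype ν] [∀ i, Fintype (Val i)] [∀ i, Nonempty (Val i)]
variable (M : CM ν Val)

/-- The correspondence between worlds of the canonical frame and worlds of the PO-SCM: the
original variables keep their values, and the response function `f_X` is read as the family of
its values, one for each potential outcome variable `X_{pa_X}`. -/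
def transfer : Asg (SumVal Val (RB M)) ≃ Asg (SumVal Val (POB M)) where
  toFun w := fun i =>
    match i with
    | .inl j => w (Sum.inl j)
    | .inr p => w (Sum.inr p.1) p.2
  invFun w := fun i =>
    match i with
    | .inl j => w (Sum.inl j)
    | .inr p => fun κ => w (Sum.inr ⟨p, κ⟩)
  left_inv w := by
    funext i
    cases i <;> rfl
  right_inv w := by
    funext i
    cases i <;> rfl

/-- The response functions of a world and the corresponding potential outcomes have the same
probability. -/
theorem prod_cpt_inr_transfer (w : Asg (SumVal Val (RB M))) :
    ∏ p : POI M, M.MN.cpt (Sum.inr p) (M.transfer w) (M.transfer w (Sum.inr p)) =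
      ∏ p : RVI M, (M.canonSCM M.qGH).cpt (Sum.inr p) w (w (Sum.inr p)) :=
  Fintype.prod_sigma (fun p : POI M =>
    M.MN.cpt (Sum.inr p) (M.transfer w) (M.transfer w (Sum.inr p)))

/-- Congruence for `if`, for arbitrary decidability instances. -/
theorem ite_eq_of_iff {p q : Prop} {dp : Decidable p} {dq : Decidable q} {a b c d : ℝ}
    (h : p ↔ q) (hab : a = b) (hcd : c = d) :
    (if p then a else c) = if q then b else d :=
  if_congr h hab hcd

/-- Reindexing of a finite sum along a bijection, for arbitrary `Fintype` instances. -/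
theorem sum_reindex {A B : Type} {iA : Fintype A} {iB : Fintype B} (e : A ≃ B)
    {f : A → ℝ} {g : B → ℝ} (h : ∀ a, f a = g (e a)) : ∑ a, f a = ∑ b, g b :=
  Fintype.sum_equiv e f g h

theorem joint_transfer (w : Asg (SumVal Val (RB M))) :
    M.MN.joint (M.transfer w) = (M.canonSCM M.qGH).joint w := by
  unfold joint
  rw [Fintype.prod_sum_type, Fintype.prod_sum_type, prod_cpt_inr_transfer]
  rfl

/-- A product over all variables of an extended signature except some original ones, for
arbitrary decidability instances. -/
theorem prod_compl_image_inl {β : Type} [Fintype β]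
    {d₁ d₂ : DecidableEq (ν ⊕ β)} (X : Finset ν) (f : ν ⊕ β → ℝ) :
    ∏ i ∈ @compl _ (@Finset.booleanAlgebra _ _ d₁).toCompl (@Finset.image _ _ d₂ Sum.inl X), f i =
      (∏ j ∈ Xᶜ, f (Sum.inl j)) * ∏ b, f (Sum.inr b) := by
  have h : @compl _ (@Finset.booleanAlgebra _ _ d₁).toCompl (@Finset.image _ _ d₂ Sum.inl X) =
      Xᶜ.disjSum univ := by
    ext i
    cases i <;> simp
  rw [h, Finset.prod_disjSum]

theorem pdo_transfer (X : Finset ν) (xv : Asg Val) (w : Asg (SumVal Val (RB M))) :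
    M.MN.pdo (X.image Sum.inl) (liftAsg xv) (M.transfer w) =
      (M.canonSCM M.qGH).pdo (X.image Sum.inl) (liftAsg xv) w := by
  unfold pdo
  rw [prod_compl_image_inl, prod_compl_image_inl, prod_cpt_inr_transfer]
  refine ite_eq_of_iff ?_ rfl rfl
  simp only [Finset.forall_mem_image]
  rfl

/-- Two worlds agree on all exogenous variables of the canonical frame exactly when their
transfers agree on all exogenous variables of the PO-SCM. -/
theorem exo_agree_transfer (w' w : Asg (SumVal Val (RB M))) :
    (∀ i ∈ M.MN.exo, M.transfer w' i = M.transfer w i) ↔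
      ∀ i ∈ (M.canonSCM M.qGH).exo, w' i = w i := by
  simp only [MN, canonSCM, Finset.forall_mem_union, Finset.forall_mem_image]
  refine and_congr Iff.rfl ⟨fun h p _ => ?_, fun h p _ => ?_⟩
  · funext κ
    exact h (x := (⟨p, κ⟩ : POI M)) (mem_univ _)
  · exact congrFun (h (x := (p.1 : RVI M)) (mem_univ _)) p.2

theorem cfBasic_transfer (X : Finset ν) (xv : Asg Val) (Y : Finset ν) (yv : Asg Val)
    (w : Asg (SumVal Val (RB M))) :
    M.MN.cfBasic (X.image Sum.inl) (liftAsg xv) (Y.image Sum.inl) (liftAsg yv)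
        (M.transfer w) =
      (M.canonSCM M.qGH).cfBasic (X.image Sum.inl) (liftAsg xv) (Y.image Sum.inl)
        (liftAsg yv) w := by
  unfold cfBasic
  congr 1
  · refine (CM.sum_reindex M.transfer fun w' => ?_).symm
    refine ite_eq_of_iff (and_congr (M.exo_agree_transfer w' w).symm ?_)
      (M.pdo_transfer X xv w').symm rfl
    simp only [Finset.forall_mem_image]
    rfl
  · refine (CM.sum_reindex M.transfer fun w' => ?_).symm
    exact ite_eq_of_iff (M.exo_agree_transfer w' w).symm (M.pdo_transfer X xv w').symm rfl

end CM

/-- **Proposition 4.** Given a causal model `M`, for all counterfactual events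
`y_x, …, z_w` with `Y, X, …, Z, W ⊆ V`: the probability of the complex counterfactual
computed in the GH-SCM equals the one computed in the PO-SCM:
`P^GH(y_x, …, z_w) = P^N(y_x, …, z_w)`. -/
theorem ghProb_eq_pnProb
    {ν : Type} {Val : ν → Type} [Fintype ν] [∀ i, Fintype (Val i)] [∀ i, Nonempty (Val i)]
    (M : CM ν Val) (hM : M.WF)
    (evs : List (CFEvent ν Val))
    (hevs : ∀ e ∈ evs, (∀ i ∈ e.X, i ∉ M.exo) ∧ (∀ i ∈ e.Y, i ∉ M.exo)) :
    extProb (M.canonSCM M.qGH) evs = M.pnProb evs := by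
  unfold CM.pnProb extProb CM.cfProb
  refine CM.sum_reindex M.transfer fun w => ?_
  rw [M.joint_transfer, List.map_map, List.map_map]
  congr 2
  exact List.map_congr_left fun e _ => (M.cfBasic_transfer e.X e.xv e.Y e.yv w).symm

end
end

section
/- Every canonical SCM M' for a causal model M induces M: for every X ⊆ V (including X = ∅) and every x ∈ R(X), the interventional distribution of M' over the endogenous variables equals that of M, i.e., P'_{do(X=x)}(V = v) = P_{do(X=x)}(V = v) for all v ∈ R(V). -/
/-!
Fix the values `a` of the original variables and sum over the values `r` of the response
variables. In the canonical SCM under `do(X = x)` the summand is the product of the factors of the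
original exogenous variables, of the indicators `[a i = r i (a|pa i)]` over the endogenous
`i ∉ X`, and of the weights `q i (r i)`. Each response variable occurs in the factors of only one
endogenous variable, so the sum over `r` factorizes. For `i ∉ X` the `i`-th factor is the total
`q`-weight of the functions sending `a|pa i` to `a i`, which is `P_M(a i | a|pa i)` since `q` is
canonical (`CM.IsCanonicalDist.sum_indicator`); for `i ∈ X` it is the total mass `1`. The result is
the truncated factorization of `M` at `a` (`CM.sum_canonSCM_pdo`), and summing over the `a` that
extend `v` gives the theorem.
-/

open Finset

noncomputable section

attribute [local instance] Classical.propDecidable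

namespace CM

variable {ν : Type} {Val : ν → Type} [Fintype ν] [∀ i, Fintype (Val i)] [∀ i, Nonempty (Val i)]

/-- The assignment on the canonical frame with original part `a` and response part `r`. -/
def combine (M : CM ν Val) (a : Asg Val) (r : (p : RVI M) → RB M p) :
    Asg (SumVal Val (RB M)) := fun i =>
  match i with
  | .inl j => a j
  | .inr p => r p

/-- Assignments on the canonical frame are pairs of an assignment of the original variables and
an assignment of the response variables. -/
def combineEquiv (M : CM ν Val) :
    (Asg Val × ((p : RVI M) → RB M p)) ≃ Asg (SumVal Val (RB M)) where
  toFun x := M.combine x.1 x.2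
  invFun w := (fun i => w (Sum.inl i), fun p => w (Sum.inr p))
  left_inv _ := rfl
  right_inv w := by
    funext i
    cases i <;> rfl

/-- A canonical distribution makes the structural equation of `p` reproduce the conditional
probability table of `M` at every assignment; the table depends on `a` only through the parents. -/
lemma IsCanonicalDist.sum_indicator {M : CM ν Val} (hM : M.WF)
    {q : (p : RVI M) → RType M p.1 → ℝ} (hq : M.IsCanonicalDist q)
    (p : RVI M) (a : Asg Val) (x : Val p.1) :
    ∑ f : RType M p.1, (if x = f (fun k => a k.1) then 1 else 0) * q p f = M.cpt p.1 a x := by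
  have h : M.cpt p.1 a x = M.cpt p.1 (M.extendPa p.1 (fun k => a k.1)) x := by
    refine hM.cpt_pa _ _ _ _ fun j hj => ?_
    simp [extendPa, hj]
  rw [h, hq.2.2 p (fun k => a k.1) x, Finset.sum_filter]
  refine Finset.sum_congr rfl fun f _ => ?_
  simp only [eq_comm (a := x), ite_mul, one_mul, zero_mul]

lemma canonSCM_pdo_combine (M : CM ν Val) (q : (p : RVI M) → RType M p.1 → ℝ)
    (X : Finset ν) (xv a : Asg Val) (r : (p : RVI M) → RB M p) :
    (M.canonSCM q).pdo (X.image Sum.inl) (liftAsg xv) (M.combine a r) =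
      if ∀ i ∈ X, a i = xv i then
        (∏ i, if i ∈ X then 1 else
          (M.canonSCM q).cpt (Sum.inl i) (M.combine a r) (M.combine a r (Sum.inl i))) * ∏ p, q p (r p)
      else 0 := by
  have hcond : (∀ i ∈ X.image Sum.inl,
      M.combine a r i = (liftAsg xv : Asg (SumVal Val (RB M))) i) ↔ ∀ i ∈ X, a i = xv i := by
    simp only [Finset.forall_mem_image]
    rfl
  unfold pdo
  -- The index set is characterized by membership because the complement inside `pdo` is taken
  -- with a different decidability instance.
  have hprod : ∀ (F : ν ⊕ RVI M → ℝ) (S : Finset (ν ⊕ RVI M)),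
      (∀ j, Sum.inl j ∈ S ↔ j ∉ X) → (∀ p, Sum.inr p ∈ S) → ∏ i ∈ S, F i =
      (∏ i, if i ∈ X then 1 else F (Sum.inl i)) * ∏ p, F (Sum.inr p) := by
    intro F S hl hr
    have : S = univ.filter (fun i => i ∈ S) := by
      ext; simp
    rw [this, Finset.prod_filter, Fintype.prod_sum_type]
    simp [ite_not, hl, hr]
  by_cases h : ∀ i ∈ X, a i = xv i
  · rw [if_pos h]
    refine (if_pos (hcond.2 h)).trans ?_
    refine hprod _ _ (fun j => ?_) (fun p => ?_) <;> simp
  · rw [if_neg h]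
    exact if_neg (mt hcond.1 h)

/-- Marginalizing the response variables out of the interventional distribution of a canonical
SCM gives the interventional distribution of `M`. -/
lemma sum_canonSCM_pdo (M : CM ν Val) (hM : M.WF)
    (q : (p : RVI M) → RType M p.1 → ℝ) (hq : M.IsCanonicalDist q)
    (X : Finset ν) (hX : ∀ i ∈ X, i ∉ M.exo) (xv a : Asg Val) :
    ∑ r : (p : RVI M) → RB M p,
      (M.canonSCM q).pdo (X.image Sum.inl) (liftAsg xv) (M.combine a r) = M.pdo X xv a := by
  simp only [canonSCM_pdo_combine]
  unfold pdo
  split_ifs with hx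
  swap
  · simp
  -- The factors of the exogenous variables do not involve `r`; each endogenous factor involves
  -- only its own response variable.
  have hsplit : ∀ F : ν → ℝ, ∏ i, F i =
      (∏ i : {i // i ∈ M.exo}, F i.1) * ∏ p : RVI M, F p.1 := fun F => by
    have h := (Fintype.prod_subtype_mul_prod_subtype (fun i => i ∈ M.exo) F).symm
    rw [h]
    congr 1
    refine Finset.prod_congr ?_ fun _ _ => rfl
    ext; simp
  have hfac : ∀ r : (p : RVI M) → RB M p,
      (∏ i, if i ∈ X then 1 else
          (M.canonSCM q).cpt (Sum.inl i) (M.combine a r) (M.combine a r (Sum.inl i))) * ∏ p, q p (r p) =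
      (∏ i : {i // i ∈ M.exo}, M.cpt i.1 a (a i.1)) *
        ∏ p : RVI M, (if p.1 ∈ X then 1 else
          if a p.1 = r p (fun k => a k.1) then 1 else 0) * q p (r p) := by
    intro r
    rw [hsplit, mul_assoc, ← Finset.prod_mul_distrib]
    congr 1
    · refine Finset.prod_congr rfl fun i _ => ?_
      rw [if_neg fun h => hX _ h i.2]
      exact dif_pos i.2
    · refine Finset.prod_congr rfl fun p _ => ?_
      congr 2
      exact dif_neg p.2
  simp only [hfac]
  rw [← Finset.mul_sum]
  have hswap := Fintype.prod_sum (ι := RVI M) (κ := RB M) (fun p f =>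
    (if p.1 ∈ X then (1 : ℝ) else if a p.1 = f (fun k => a k.1) then 1 else 0) * q p f)
  have hfin : ∏ i ∈ Xᶜ, M.cpt i a (a i) = ∏ i, if i ∈ X then 1 else M.cpt i a (a i) := by
    have : Xᶜ = univ.filter (fun i => i ∉ X) := by
      ext; simp
    rw [this, Finset.prod_filter]
    simp [ite_not]
  rw [hfin, hsplit, ← hswap]
  congr 1
  · refine Finset.prod_congr rfl fun i _ => ?_
    rw [if_neg fun h => hX _ h i.2]
  · refine Finset.prod_congr rfl fun p _ => ?_
    by_cases hp : p.1 ∈ X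
    · simp only [hp, if_true, one_mul]
      exact hq.2.1 p
    · simp only [hp, if_false]
      exact hq.sum_indicator hM p a (a p.1)

end CM

/-- Every canonical SCM `M'` for a causal model `M` induces `M`: for every `X ⊆ V`
(including `X = ∅`) and every `x ∈ R(X)`, the interventional distribution of `M'` over
the endogenous variables equals that of `M`, i.e.
`P'_{do(X=x)}(V = v) = P_{do(X=x)}(V = v)` for all `v ∈ R(V)`. -/
theorem canonicalSCM_induces
    {ν : Type} {Val : ν → Type} [Fintype ν] [∀ i, Fintype (Val i)] [∀ i, Nonempty (Val i)]
    (M : CM ν Val) (hM : M.WF)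
    (q : (p : CM.RVI M) → CM.RType M p.1 → ℝ) (hq : M.IsCanonicalDist q)
    (X : Finset ν) (hX : ∀ i ∈ X, i ∉ M.exo) (xv : Asg Val) (v : Asg Val) :
    (∑ w : Asg (SumVal Val (CM.RB M)),
        if ∀ i : ν, i ∉ M.exo → w (Sum.inl i) = v i then
          (M.canonSCM q).pdo (X.image Sum.inl) (liftAsg xv) w
        else 0)
    = ∑ w : Asg Val, if ∀ i : ν, i ∉ M.exo → w i = v i then M.pdo X xv w else 0 := by
  rw [← Equiv.sum_comp M.combineEquiv, Fintype.sum_prod_type]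
  refine Finset.sum_congr rfl fun a _ => ?_
  rw [← M.sum_canonSCM_pdo hM q hq X hX xv a]
  by_cases h : ∀ i : ν, i ∉ M.exo → a i = v i
  · rw [if_pos h]
    exact Finset.sum_congr rfl fun r _ => if_pos h
  · rw [if_neg h]
    exact Finset.sum_eq_zero fun r _ => if_neg h

end
end

section
/- The PO-SCM M^N of a causal model M induces M: for every X ⊆ V (including X = ∅) and every x ∈ R(X), the interventional distribution of M^N over the endogenous variables equals that of M, i.e., P^N_{do(X=x)}(V = v) = P_{do(X=x)}(V = v) for all v ∈ R(V). -/
/-!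
For a fixed assignment `a` of the original variables, the truncated factorization of `M^N`
splits into the factors of the original variables and those of the potential outcomes.
The structural equation of an endogenous `j ∉ X` is the indicator that the single potential
outcome `j_{pa_j}`, with `pa_j` the parent values read off from `a`, equals `a j`; it
therefore only constrains that one potential outcome. Since the potential outcomes are
independent, the sum over all of them factorizes, `∑_b ∏_p = ∏_p ∑_x`. The factor of a
potential outcome that is not selected is `∑_x P(j = x | pa) = 1`, and that of the selected
one is `P(j = a j | pa_j)`, which is the factor of `j` in the truncated factorization of `M`
(`CM.sum_pdo_MN`). Summing over the assignments `a` compatible with `v` gives the claim.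
-/

open Finset

noncomputable section

attribute [local instance] Classical.propDecidable

namespace CM

variable {ν : Type} {Val : ν → Type} [Fintype ν] [∀ i, Fintype (Val i)] [∀ i, Nonempty (Val i)]

/-- The full assignment of the variables of `M^N` that is `a` on the original variables and
`b` on the potential outcomes. -/
def joinAsg (M : CM ν Val) (a : Asg Val) (b : Asg (POB M)) : Asg (SumVal Val (POB M)) :=
  fun i => match i with
  | .inl j => a j
  | .inr p => b p

/-- The values that `a` gives to the parents of `j`. -/
def restrictPa (M : CM ν Val) (a : Asg Val) (j : ν) : M.PaAsg j := fun k => a k.1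

lemma cpt_extendPa_restrictPa (M : CM ν Val) (hM : M.WF) (a : Asg Val) (j : ν) (x : Val j) :
    M.cpt j (M.extendPa j (M.restrictPa a j)) x = M.cpt j a x := by
  apply hM.cpt_pa
  intro k hk
  simp [extendPa, restrictPa, hk]

/-- The weight that the structural equations put on the value `x` of the potential outcome
`p` when the original variables have the values `a`: the indicator of `x = a j` if
`p = j_{pa_j}` is the potential outcome selected by `a` and `j ∉ X`, and `1` otherwise. -/
def selWeight (M : CM ν Val) (X : Finset ν) (a : Asg Val) (p : POI M) (x : POB M p) : ℝ :=
  if p.2 = M.restrictPa a p.1.1 then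
    (if p.1.1 ∈ X then 1 else if a p.1.1 = x then 1 else 0)
  else 1

lemma sum_selWeight (M : CM ν Val) (hM : M.WF) (X : Finset ν) (a : Asg Val) (p : POI M) :
    (∑ x : POB M p, M.selWeight X a p x * M.cpt p.1.1 (M.extendPa p.1.1 p.2) x)
      = if p.2 = M.restrictPa a p.1.1 then
          (if p.1.1 ∈ X then 1 else M.cpt p.1.1 a (a p.1.1))
        else 1 := by
  obtain ⟨⟨j, hj⟩, κ⟩ := p
  change (∑ x : Val j, (if κ = M.restrictPa a j then
    (if j ∈ X then (1 : ℝ) else if a j = x then 1 else 0) else 1)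
      * M.cpt j (M.extendPa j κ) x) = if κ = M.restrictPa a j then
          (if j ∈ X then 1 else M.cpt j a (a j)) else 1
  by_cases h : κ = M.restrictPa a j
  · subst h
    by_cases hx : j ∈ X
    · simp [hx, hM.cpt_sum]
    · simp [hx, M.cpt_extendPa_restrictPa hM]
  · simp [h, hM.cpt_sum]

/-- A product over the potential outcomes in which only the ones selected by the parent
values `κ j` contribute is a product over the endogenous variables. -/
lemma prod_POI_s8 (M : CM ν Val) (κ : ∀ j, M.PaAsg j) (f : (j : {j : ν // j ∉ M.exo}) → ℝ) :
    (∏ p : POI M, if p.2 = κ p.1.1 then f p.1 else 1) = ∏ j, f j := by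
  have h := Fintype.prod_sigma
    (fun p : (Σ j : {j : ν // j ∉ M.exo}, M.PaAsg j.1) => if p.2 = κ p.1.1 then f p.1 else 1)
  refine Eq.trans ?_ (h.trans ?_)
  · rfl
  · refine Fintype.prod_congr _ _ fun j => ?_
    simp

lemma prod_split_exo (E : Finset ν) [Fintype {j : ν // j ∉ E}] (f : ν → ℝ) :
    (∏ j, f j) = (∏ j ∈ E, f j) * ∏ j : {j : ν // j ∉ E}, f j.1 := by
  rw [← Finset.prod_mul_prod_compl E f, Finset.prod_subtype Eᶜ (p := fun j => j ∉ E) (by simp)]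

lemma prod_eq_prod_ite {ι : Type} [Fintype ι] (S : Finset ι) (p : ι → Prop)
    [DecidablePred p] (hS : ∀ i, i ∈ S ↔ ¬ p i) (f : ι → ℝ) :
    (∏ i ∈ S, f i) = ∏ i, if p i then 1 else f i := by
  rw [← Finset.prod_subset (Finset.subset_univ S)]
  · refine Finset.prod_congr rfl fun i hi => ?_
    rw [if_neg ((hS i).1 hi)]
  · intro i _ hi
    rw [if_pos (not_not.1 fun h => hi ((hS i).2 h))]

/-- For fixed values `a` of the original variables, the truncated factorization of `M^N`
splits into exogenous factors and one factor per potential outcome. The set `S` of variables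
not intervened on is given by its membership condition. -/
lemma prod_cpt_MN (M : CM ν Val) (X : Finset ν) (S : Finset (ν ⊕ POI M))
    (hS : ∀ i, i ∈ S ↔ ¬ ∃ j ∈ X, Sum.inl j = i) (a : Asg Val) (b : Asg (POB M)) :
    (∏ i ∈ S, M.MN.cpt i (M.joinAsg a b) (M.joinAsg a b i))
      = (∏ j ∈ M.exo, if j ∈ X then 1 else M.cpt j a (a j)) *
        ∏ p : POI M, M.selWeight X a p (b p) * M.cpt p.1.1 (M.extendPa p.1.1 p.2) (b p) := by
  have hX : ∀ j : ν, (∃ k ∈ X, (Sum.inl k : ν ⊕ POI M) = Sum.inl j) ↔ j ∈ X := by simp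
  rw [prod_eq_prod_ite S _ hS, Fintype.prod_sum_type, Finset.prod_mul_distrib, ← mul_assoc]
  refine congrArg₂ (· * ·) ?_ ?_
  · rw [prod_split_exo M.exo]
    refine congrArg₂ (· * ·) ?_ ?_
    · refine Finset.prod_congr rfl fun j hj => ?_
      simp only [hX, MN, dif_pos hj]
      rfl
    · have hp := M.prod_POI_s8 (fun j => M.restrictPa a j) (fun j => if j.1 ∈ X then 1 else
          if a j.1 = b ⟨j, M.restrictPa a j.1⟩ then 1 else 0)
      refine Eq.trans ?_ (hp.symm.trans ?_)
      · refine Fintype.prod_congr _ _ fun j => ?_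
        simp only [hX, MN, dif_neg j.2]
        rfl
      · refine Fintype.prod_congr _ _ fun p => ?_
        obtain ⟨j, κ⟩ := p
        unfold selWeight
        by_cases h : κ = M.restrictPa a j.1
        · subst h
          rfl
        · exact (if_neg h).trans (if_neg h).symm
  · refine Fintype.prod_congr _ _ fun p => ?_
    rw [if_neg (by simp)]
    rfl

/-- Marginalizing the interventional distribution of `M^N` over the potential outcomes gives
the interventional distribution of `M` over all of its variables. -/
lemma sum_pdo_MN (M : CM ν Val) (hM : M.WF) (X : Finset ν) (xv a : Asg Val) :
    (∑ b : Asg (POB M), M.MN.pdo (X.image Sum.inl) (liftAsg xv) (M.joinAsg a b))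
      = M.pdo X xv a := by
  have hc : ∀ b : Asg (POB M), (∀ i ∈ X.image Sum.inl,
      M.joinAsg a b i = liftAsg (B := POB M) xv i) ↔ ∀ i ∈ X, a i = xv i := by
    intro b
    simp only [Finset.forall_mem_image]
    rfl
  unfold pdo
  simp only [hc]
  split_ifs
  · rw [Fintype.sum_congr _ _ fun b => M.prod_cpt_MN X _ (by simp) a b]
    rw [← Finset.mul_sum, ← Fintype.prod_sum (fun (p : POI M) (x : POB M p) =>
      M.selWeight X a p x * M.cpt p.1.1 (M.extendPa p.1.1 p.2) x)]
    rw [Fintype.prod_congr _ _ (M.sum_selWeight hM X a)]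
    rw [M.prod_POI_s8 (fun j => M.restrictPa a j)
      (fun j => if j.1 ∈ X then 1 else M.cpt j.1 a (a j.1)),
      prod_eq_prod_ite Xᶜ (fun j => j ∈ X) (by simp),
      prod_split_exo M.exo (fun j => if j ∈ X then 1 else M.cpt j a (a j))]
  · simp

end CM

/-- The PO-SCM `M^N` of a causal model `M` induces `M`: for every `X ⊆ V` (including
`X = ∅`) and every `x ∈ R(X)`, the interventional distribution of `M^N` over the
endogenous variables equals that of `M`, i.e.
`P^N_{do(X=x)}(V = v) = P_{do(X=x)}(V = v)` for all `v ∈ R(V)`. -/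
theorem MN_induces
    {ν : Type} {Val : ν → Type} [Fintype ν] [∀ i, Fintype (Val i)] [∀ i, Nonempty (Val i)]
    (M : CM ν Val) (hM : M.WF)
    (X : Finset ν) (hX : ∀ i ∈ X, i ∉ M.exo) (xv : Asg Val) (v : Asg Val) :
    (∑ w : Asg (SumVal Val (CM.POB M)),
        if ∀ i : ν, i ∉ M.exo → w (Sum.inl i) = v i then
          M.MN.pdo (X.image Sum.inl) (liftAsg xv) w
        else 0)
    = ∑ w : Asg Val, if ∀ i : ν, i ∉ M.exo → w i = v i then M.pdo X xv w else 0 := by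
  have hs := (Equiv.sumPiEquivProdPi (SumVal Val (CM.POB M))).symm.sum_comp
    (fun w : Asg (SumVal Val (CM.POB M)) =>
      if ∀ i : ν, i ∉ M.exo → w (Sum.inl i) = v i then
        M.MN.pdo (X.image Sum.inl) (liftAsg xv) w else 0)
  have hj : ∀ ab : Asg Val × Asg (CM.POB M),
      (Equiv.sumPiEquivProdPi (SumVal Val (CM.POB M))).symm ab = M.joinAsg ab.1 ab.2 := by
    intro ab
    funext i
    cases i <;> rfl
  refine Eq.trans ?_ (hs.symm.trans ?_)
  · exact Finset.sum_congr (by congr!) fun _ _ => rfl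
  · refine Eq.trans (Fintype.sum_congr _ (fun ab : Asg Val × Asg (CM.POB M) =>
      if ∀ i : ν, i ∉ M.exo → ab.1 i = v i then
        M.MN.pdo (X.image Sum.inl) (liftAsg xv) (M.joinAsg ab.1 ab.2) else 0) ?_) ?_
    · intro ab
      rw [hj]
      rfl
    · refine Eq.trans (Fintype.sum_prod_type _) (Fintype.sum_congr _ _ fun a => ?_)
      dsimp only
      split_ifs
      · exact M.sum_pdo_MN hM X xv a
      · simp

end
end

section
/- In the PO-SCM M^N of a causal model M, for every (u, v) ∈ R(U ∪ V) with P_M(u, v) > 0, every X ⊆ V and every v* ∈ R(V) whose restriction to X equals the intervention values x*, the probability of the basic counterfactual factorizes as: P^N(V = v*_{X←x*} | U = u, V = v) = ∏_{Y ∈ V∖X with pa_Y = pa_Y*} 1{y* = y} · ∏_{Y ∈ V∖X with pa_Y ≠ pa_Y*} P_M(Y = y* | Pa_Y = pa_Y*), where for each Y, (y, pa_Y) are the values of Y and its parents read off from (u, v) and (y*, pa_Y*) are those read off from (u, v*). -/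
/-!
Write a world of `M^N` as a pair `(c, n)`, with `c` the values of the variables of `M` and
`n` those of the potential outcome variables. Every endogenous table of `M^N` is the
indicator of a structural equation, so `P^N(a, n)` is `P(u)` times the indicator that `a`
satisfies the equations given by `n`, times `P(n)` (`CM.joint_poWorld`).

Given `u` and `n`, acyclicity makes the intervened equations uniquely solvable, so the
counterfactual at `(a, n)` is the indicator that `b` satisfies the equations outside `X`
(`CM.cfBasic_poWorld`). Both the numerator and the denominator of the conditional
probability are then sums over `n` of a product of functions of the single coordinates of
`n`, and factor over the potential outcome variables (`CM.sum_poEq`). The variable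
`Y_{pa_Y}` contributes `P(y | pa_Y)` to both, which cancels. If `pa_Y = pa_Y*` the equation
for `b` constrains that same variable and gives `1{y* = y}`; otherwise it constrains the
independent variable `Y_{pa_Y*}` and gives `P(y* | pa_Y*)`.
-/

open Finset

noncomputable section

attribute [local instance] Classical.propDecidable

namespace CM

variable {ν : Type} {Val : ν → Type} [Fintype ν] [∀ i, Fintype (Val i)] [∀ i, Nonempty (Val i)]
variable (M : CM ν Val)

/-! ### Worlds of the PO-SCM and their probabilities -/

/-- The world of `M^N` with values `c` of the variables of `M` and values `n` of the
potential outcome variables. -/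
def poWorld (c : Asg Val) (n : (p : POI M) → POB M p) : Asg (SumVal Val (POB M)) := fun i =>
  match i with
  | .inl j => c j
  | .inr p => n p

/-- The values that `c` gives to the parents of `i`. -/
def paRes (i : ν) (c : Asg Val) : M.PaAsg i := fun k => c k.1

/-- The potential outcome variable of `i` for the values `κ` of its parents. -/
def poVar (i : {i : ν // i ∉ M.exo}) (κ : M.PaAsg i.1) : POI M := ⟨i, κ⟩

/-- The value in `n` of the potential outcome variable of `i` for the values `κ` of its
parents, as a value of `i`. -/
def poVal (n : (p : POI M) → POB M p) (i : {i : ν // i ∉ M.exo}) (κ : M.PaAsg i.1) :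
    Val i.1 := n (M.poVar i κ)

/-- The indicator that `c` and `n` satisfy the structural equation of `i` in `M^N`. -/
def poEq (c : Asg Val) (n : (p : POI M) → POB M p) (i : {i : ν // i ∉ M.exo}) : ℝ :=
  if c i.1 = M.poVal n i (M.paRes i.1 c) then 1 else 0

/-- The probability of the exogenous part of `c`. -/
def exoProb (c : Asg Val) : ℝ := ∏ i ∈ M.exo, M.cpt i c (c i)

/-- The probability of the values `n` of the potential outcome variables. -/
def poProb (n : (p : POI M) → POB M p) : ℝ :=
  ∏ p : POI M, M.cpt p.1.1 (M.extendPa p.1.1 p.2) (n p)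

lemma sum_poWorld {inst : Fintype (Asg (SumVal Val (POB M)))}
    (F : Asg (SumVal Val (POB M)) → ℝ) :
    ∑ w, F w = ∑ c : Asg Val, ∑ n : ((p : POI M) → POB M p), F (M.poWorld c n) := by
  rw [← Fintype.sum_prod_type' (f := fun c n => F (M.poWorld c n))]
  refine Fintype.sum_equiv (Equiv.sumPiEquivProdPi _) _ _ fun w => ?_
  congr 1
  funext i
  cases i <;> rfl

lemma prod_split (f : ν → ℝ) :
    ∏ i, f i = (∏ i ∈ M.exo, f i) * ∏ i : {i : ν // i ∉ M.exo}, f i.1 := by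
  rw [← Finset.prod_mul_prod_compl M.exo f]
  congr 1
  exact Finset.prod_subtype _ (by simp) f

lemma pdo_eq (X : Finset ν) (xv w : Asg Val) :
    M.pdo X xv w = if ∀ i ∈ X, w i = xv i then
      ∏ i, (if i ∈ X then 1 else M.cpt i w (w i)) else 0 := by
  unfold pdo
  refine if_congr Iff.rfl ?_ rfl
  rw [Finset.prod_ite, Finset.prod_const_one, one_mul]
  refine Finset.prod_congr ?_ fun _ _ => rfl
  ext i; simp

/-- The truncated factorization in `M^N`: the tables of the endogenous variables of `M`
become indicators of their structural equations. -/
lemma pdo_poWorld (X : Finset ν) (hX : ∀ i ∈ X, i ∉ M.exo) (xv c : Asg Val)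
    (n : (p : POI M) → POB M p) :
    M.MN.pdo (X.image Sum.inl) (liftAsg xv) (M.poWorld c n) =
      if ∀ i ∈ X, c i = xv i then
        M.exoProb c * (∏ i : {i : ν // i ∉ M.exo}, if i.1 ∈ X then 1 else M.poEq c n i)
          * M.poProb n
      else 0 := by
  rw [pdo_eq]
  have h1 : (∀ i ∈ X.image (Sum.inl : ν → ν ⊕ POI M),
      M.poWorld c n i = (liftAsg xv : Asg (SumVal Val (POB M))) i) ↔ ∀ i ∈ X, c i = xv i := by
    simp only [Finset.mem_image, forall_exists_index, and_imp, forall_apply_eq_imp_iff₂]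
    rfl
  simp only [h1]
  refine if_congr Iff.rfl ?_ rfl
  rw [Fintype.prod_sum_type, M.prod_split]
  congr 1
  · congr 1
    · refine Finset.prod_congr rfl fun i hi => ?_
      have : i ∉ X := fun h => hX i h hi
      rw [if_neg (by simpa using this)]
      simp only [MN, hi, dif_pos]
      rfl
    · refine Finset.prod_congr rfl fun i _ => ?_
      by_cases hi : i.1 ∈ X
      · rw [if_pos (by simpa using hi), if_pos hi]
      · rw [if_neg (by simpa using hi), if_neg hi]
        exact dif_neg i.2
  · refine Finset.prod_congr rfl fun p _ => ?_
    rw [if_neg (by simp)]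
    rfl

lemma joint_poWorld (c : Asg Val) (n : (p : POI M) → POB M p) :
    M.MN.joint (M.poWorld c n) = M.exoProb c * (∏ i, M.poEq c n i) * M.poProb n := by
  have h := M.pdo_poWorld ∅ (by simp) c c n
  simpa [pdo, joint] using h

/-! ### Counterfactuals given all exogenous values -/

/-- In an acyclic graph, a system of structural equations has exactly one solution. -/
lemma exists_unique_solution (hM : M.WF) (f : (i : ν) → M.PaAsg i → Val i) :
    ∃! c : Asg Val, ∀ i, c i = f i (M.paRes i c) := by
  have wf : WellFounded fun j i : ν => M.ord j < M.ord i := InvImage.wf M.ord wellFounded_lt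
  refine ⟨wf.fix fun i rec => f i fun k => rec k.1 (hM.acyclic i k.1 k.2), ?_, ?_⟩
  · intro i
    rw [wf.fix_eq]
    rfl
  · intro c hc
    funext i
    induction i using wf.induction with
    | _ i ih =>
      rw [hc i, wf.fix_eq]
      congr 1
      funext k
      exact ih k.1 (hM.acyclic i k.1 k.2)

lemma exoProb_congr (hM : M.WF) {a c : Asg Val} (h : ∀ i ∈ M.exo, c i = a i) :
    M.exoProb c = M.exoProb a := by
  refine Finset.prod_congr rfl fun i hi => ?_
  rw [h i hi]
  exact hM.cpt_pa i _ _ _ (by simp [hM.pa_exo i hi])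

/-- Once the values of the exogenous variables and of the potential outcome variables are
fixed, exactly one world satisfies the structural equations left by the intervention, so
the normalizing constant of the counterfactual is the probability of those values. -/
lemma sum_solution (hM : M.WF) (a : Asg Val) (X : Finset ν) (hX : ∀ i ∈ X, i ∉ M.exo)
    (xv : Asg Val) (n : (p : POI M) → POB M p) :
    (∑ c : Asg Val, if ∀ i ∈ M.exo, c i = a i then
        M.MN.pdo (X.image Sum.inl) (liftAsg xv) (M.poWorld c n) else 0)
      = M.exoProb a * M.poProb n := by
  obtain ⟨c, hc, huniq⟩ := M.exists_unique_solution hM fun i κ =>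
    if h : i ∈ M.exo then a i else if i ∈ X then xv i else M.poVal n ⟨i, h⟩ κ
  have hexo : ∀ i ∈ M.exo, c i = a i := fun i hi => by rw [hc i, dif_pos hi]
  have hcx : ∀ i ∈ X, c i = xv i := fun i hi => by rw [hc i, dif_neg (hX i hi), if_pos hi]
  rw [Finset.sum_eq_single c]
  · rw [if_pos hexo, pdo_poWorld M X hX, if_pos hcx, M.exoProb_congr hM hexo,
      Finset.prod_eq_one, mul_one]
    intro i _
    split_ifs with hi
    · rfl
    · refine if_pos ?_
      rw [hc i.1, dif_neg i.2, if_neg hi]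
  · intro d _ hd
    by_contra hne
    apply hd
    apply huniq
    by_cases h1 : ∀ i ∈ M.exo, d i = a i
    swap
    · exact absurd (if_neg h1) hne
    rw [if_pos h1, pdo_poWorld M X hX] at hne
    by_cases h2 : ∀ i ∈ X, d i = xv i
    swap
    · exact absurd (if_neg h2) hne
    rw [if_pos h2] at hne
    have h3 := Finset.prod_ne_zero_iff.1 (right_ne_zero_of_mul (left_ne_zero_of_mul hne))
    intro i
    by_cases hi : i ∈ M.exo
    · rw [dif_pos hi, h1 i hi]
    rw [dif_neg hi]
    by_cases hiX : i ∈ X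
    · rw [if_pos hiX, h2 i hiX]
    rw [if_neg hiX]
    have h4 := h3 ⟨i, hi⟩ (mem_univ _)
    rw [if_neg hiX] at h4
    by_contra h5
    exact h4 (if_neg h5)
  · simp

/-- A sum over the worlds of `M^N` that satisfy `P`, where `P` fixes the potential outcome
variables to `n` and restricts the variables of `M` by `Q`. -/
lemma sum_poWorld_fixed {inst : Fintype (Asg (SumVal Val (POB M)))}
    {P : Asg (SumVal Val (POB M)) → Prop} {dP : DecidablePred P}
    {Q : Asg Val → Prop} {dQ : DecidablePred Q} (n : (p : POI M) → POB M p)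
    (hP : ∀ c m, P (M.poWorld c m) ↔ m = n ∧ Q c) (F : Asg (SumVal Val (POB M)) → ℝ) :
    (∑ w, if P w then F w else 0) = ∑ c, if Q c then F (M.poWorld c n) else 0 := by
  rw [M.sum_poWorld]
  refine Finset.sum_congr rfl fun c _ => ?_
  rw [Finset.sum_eq_single n]
  · by_cases h : Q c
    · rw [if_pos ((hP c n).2 ⟨rfl, h⟩), if_pos h]
    · rw [if_neg fun h' => h ((hP c n).1 h').2, if_neg h]
  · intro m _ hm
    exact if_neg fun h' => hm ((hP c m).1 h').1
  · simp

/-- A sum over the worlds of `M^N` in which the variables of `M` take the values `a`. -/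
lemma sum_poWorld_actual {inst : Fintype (Asg (SumVal Val (POB M)))} (a : Asg Val)
    {P : Asg (SumVal Val (POB M)) → Prop} {dP : DecidablePred P}
    (hP : ∀ w, P w ↔ ∀ i : ν, w (Sum.inl i) = a i) (F : Asg (SumVal Val (POB M)) → ℝ) :
    (∑ w, if P w then F w else 0) = ∑ n, F (M.poWorld a n) := by
  rw [M.sum_poWorld, Finset.sum_eq_single a]
  · exact Finset.sum_congr rfl fun n _ => if_pos ((hP _).2 fun _ => rfl)
  · intro c _ hc
    exact Finset.sum_eq_zero fun n _ => if_neg fun h => hc (funext ((hP _).1 h))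
  · simp

lemma agree_exo (c a : Asg Val) (m n : (p : POI M) → POB M p) :
    (∀ i ∈ M.MN.exo, M.poWorld c m i = M.poWorld a n i) ↔
      m = n ∧ ∀ i ∈ M.exo, c i = a i := by
  constructor
  · intro h
    refine ⟨funext fun p => h (Sum.inr p) (by simp [MN]), fun i hi => h (Sum.inl i) ?_⟩
    simpa [MN] using hi
  · rintro ⟨rfl, h⟩ (i | p) hi
    · exact h i (by simpa [MN] using hi)
    · rfl

/-- Given all exogenous values of `M^N` of positive probability, the counterfactual holds
exactly when `b` satisfies the structural equations of the variables outside `X`. -/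
lemma cfBasic_poWorld (hM : M.WF) (a : Asg Val) (X : Finset ν) (hX : ∀ i ∈ X, i ∉ M.exo)
    (xv b : Asg Val) (hbu : ∀ i ∈ M.exo, b i = a i) (hbx : ∀ i ∈ X, b i = xv i)
    (n : (p : POI M) → POB M p) (hn : M.exoProb a * M.poProb n ≠ 0) :
    M.MN.cfBasic (X.image Sum.inl) (liftAsg xv) (M.exoᶜ.image Sum.inl) (liftAsg b)
        (M.poWorld a n)
      = ∏ i : {i : ν // i ∉ M.exo}, if i.1 ∈ X then 1 else M.poEq b n i := by
  have hY : ∀ c m, (∀ i ∈ M.exoᶜ.image (Sum.inl : ν → ν ⊕ POI M),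
      M.poWorld c m i = (liftAsg b : Asg (SumVal Val (POB M))) i) ↔ ∀ i ∉ M.exo, c i = b i := by
    intro c m
    simp only [Finset.mem_image, forall_exists_index, and_imp, forall_apply_eq_imp_iff₂,
      Finset.mem_compl]
    rfl
  unfold cfBasic
  have hden := M.sum_solution hM a X hX xv n
  have hb : ∀ c : Asg Val, ((∀ i ∈ M.exo, c i = a i) ∧ ∀ i ∉ M.exo, c i = b i) ↔ c = b := by
    intro c
    constructor
    · rintro ⟨h1, h2⟩
      funext i
      by_cases hi : i ∈ M.exo
      · rw [h1 i hi, hbu i hi]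
      · exact h2 i hi
    · rintro rfl
      exact ⟨hbu, fun _ _ => rfl⟩
  refine (congrArg₂ (· / ·)
    (M.sum_poWorld_fixed (Q := fun c => c = b) (dQ := fun c => Classical.propDecidable _) n
      (fun c m => ?_) _)
    ((M.sum_poWorld_fixed n (fun c m => M.agree_exo c a m n) _).trans hden)).trans ?_
  · rw [agree_exo, hY, and_assoc, hb]
  have hnum : (∑ c : Asg Val, @ite _ (c = b) (Classical.propDecidable _)
      (M.MN.pdo (X.image Sum.inl) (liftAsg xv) (M.poWorld c n)) 0)
      = M.MN.pdo (X.image Sum.inl) (liftAsg xv) (M.poWorld b n) := by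
    rw [Finset.sum_eq_single b]
    · exact if_pos rfl
    · exact fun c _ hc => if_neg hc
    · simp
  refine (congrArg (· / _) hnum).trans ?_
  rw [pdo_poWorld M X hX, if_pos hbx, M.exoProb_congr hM hbu, div_eq_iff hn]
  ring

/-! ### Averaging over the potential outcome variables -/

lemma prod_poi (g : POI M → ℝ) :
    ∏ p, g p = ∏ i : {i : ν // i ∉ M.exo}, ∏ κ : M.PaAsg i.1, g (M.poVar i κ) :=
  Fintype.prod_sigma g

/-- Each endogenous variable selects one potential outcome variable, that of the values of
its parents in `c`; the product over the selected ones is a product over all of them. -/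
lemma prod_poVar (c : Asg Val) (f : (i : {i : ν // i ∉ M.exo}) → M.PaAsg i.1 → ℝ) :
    ∏ i, f i (M.paRes i.1 c)
      = ∏ p : POI M, if p.2 = M.paRes p.1.1 c then f p.1 p.2 else 1 := by
  rw [prod_poi]
  refine Finset.prod_congr rfl fun i _ => ?_
  rw [Finset.prod_eq_single (M.paRes i.1 c)]
  · exact (if_pos rfl).symm
  · exact fun κ _ hκ => if_neg hκ
  · simp

lemma cpt_extendPa (hM : M.WF) (c : Asg Val) (i : {i : ν // i ∉ M.exo}) (x : Val i.1) :
    M.cpt i.1 (M.extendPa i.1 (M.paRes i.1 c)) x = M.cpt i.1 c x := by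
  refine hM.cpt_pa _ _ _ _ fun j hj => ?_
  simp [extendPa, paRes, hj]

/-- Independence of the potential outcome variables: the probability that `a` satisfies all
structural equations and `b` those outside `X` is a product over the endogenous variables.
For `i ∉ X` the two equations constrain the same potential outcome variable when `a` and
`b` agree on the parents of `i`, and two independent ones otherwise. -/
lemma sum_poEq (hM : M.WF) (a b : Asg Val) (X : Finset ν) :
    ∑ n : ((p : POI M) → POB M p),
      (∏ i : {i : ν // i ∉ M.exo}, if i.1 ∈ X then 1 else M.poEq b n i) *
        ((∏ i, M.poEq a n i) * M.poProb n)
      = ∏ i : {i : ν // i ∉ M.exo}, (M.cpt i.1 a (a i.1) *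
          if i.1 ∈ X then 1 else
            if ∀ j ∈ M.pa i.1, a j = b j then (if b i.1 = a i.1 then (1 : ℝ) else 0)
            else M.cpt i.1 b (b i.1)) := by
  have e : ∀ n : ((p : POI M) → POB M p),
      (∏ i : {i : ν // i ∉ M.exo}, if i.1 ∈ X then 1 else M.poEq b n i) *
        ((∏ i, M.poEq a n i) * M.poProb n)
      = ∏ p : POI M, ((if p.2 = M.paRes p.1.1 b then
            (if p.1.1 ∈ X then 1 else if b p.1.1 = n p then (1 : ℝ) else 0) else 1) *
          ((if p.2 = M.paRes p.1.1 a then (if a p.1.1 = n p then (1 : ℝ) else 0) else 1) *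
            M.cpt p.1.1 (M.extendPa p.1.1 p.2) (n p))) := by
    intro n
    rw [Finset.prod_mul_distrib, Finset.prod_mul_distrib]
    congr 1
    · exact M.prod_poVar b fun i κ =>
        if i.1 ∈ X then 1 else if b i.1 = M.poVal n i κ then (1 : ℝ) else 0
    · congr 1
      exact M.prod_poVar a fun i κ => if a i.1 = M.poVal n i κ then (1 : ℝ) else 0
  simp only [e]
  have e2 := Finset.prod_univ_sum (fun p : POI M => (univ : Finset (POB M p)))
    (fun p x => ((if p.2 = M.paRes p.1.1 b then
            (if p.1.1 ∈ X then 1 else if b p.1.1 = x then (1 : ℝ) else 0) else 1) *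
          ((if p.2 = M.paRes p.1.1 a then (if a p.1.1 = x then (1 : ℝ) else 0) else 1) *
            M.cpt p.1.1 (M.extendPa p.1.1 p.2) x)))
  rw [Fintype.piFinset_univ] at e2
  refine (Eq.trans ?_ e2.symm).trans ?_
  · exact Finset.sum_congr (by ext; simp) fun _ _ => rfl
  refine (M.prod_poi _).trans (Finset.prod_congr rfl fun i _ => ?_)
  have hsum : ∀ κ : M.PaAsg i.1, ∑ x : Val i.1, M.cpt i.1 (M.extendPa i.1 κ) x = 1 :=
    fun κ => hM.cpt_sum _ _
  have key : ∏ κ : M.PaAsg i.1, ∑ x : Val i.1,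
      ((if κ = M.paRes i.1 b then
            (if i.1 ∈ X then 1 else if b i.1 = x then (1 : ℝ) else 0) else 1) *
          ((if κ = M.paRes i.1 a then (if a i.1 = x then (1 : ℝ) else 0) else 1) *
            M.cpt i.1 (M.extendPa i.1 κ) x)) = (M.cpt i.1 a (a i.1) *
          if i.1 ∈ X then 1 else
            if ∀ j ∈ M.pa i.1, a j = b j then (if b i.1 = a i.1 then (1 : ℝ) else 0)
            else M.cpt i.1 b (b i.1)) := by
    set ka : M.PaAsg i.1 := M.paRes i.1 a with hka
    set kb : M.PaAsg i.1 := M.paRes i.1 b with hkb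
    have ca : ∀ x, M.cpt i.1 (M.extendPa i.1 ka) x = M.cpt i.1 a x := M.cpt_extendPa hM a i
    have cb : ∀ x, M.cpt i.1 (M.extendPa i.1 kb) x = M.cpt i.1 b x := M.cpt_extendPa hM b i
    have hpa : (∀ j ∈ M.pa i.1, a j = b j) ↔ ka = kb := by
      constructor
      · intro h; funext k; exact h k.1 k.2
      · intro h j hj; exact congrFun h ⟨j, hj⟩
    simp only [hpa]
    by_cases hX : i.1 ∈ X
    · simp only [hX, if_true, ite_self, one_mul, mul_one]
      rw [Finset.prod_eq_single ka]
      · simp [ca]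
      · intro κ _ hκ
        simp [hκ, hsum]
      · simp
    · simp only [hX, if_false]
      by_cases hab : ka = kb
      · rw [if_pos hab, Finset.prod_eq_single ka]
        · simp [← hab, ca, eq_comm]
        · intro κ _ hκ
          have : κ ≠ kb := hab ▸ hκ
          simp [hκ, this, hsum]
        · simp
      · rw [if_neg hab, Finset.prod_eq_mul ka kb hab]
        · simp [hab, Ne.symm hab, ca, cb]
        · intro κ _ hκ
          simp [hκ.1, hκ.2, hsum]
        · simp
        · simp
  exact key

end CM

/-- In the PO-SCM `M^N` of a causal model `M`, for every `(u, v) ∈ R(U ∪ V)` with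
`P_M(u, v) > 0`, every `X ⊆ V` and every `v* ∈ R(V)` whose restriction to `X` equals
the intervention values `x*`, the probability of the basic counterfactual factorizes as
`P^N(V = v*_{X←x*} | U = u, V = v)
  = ∏_{Y ∈ V∖X, pa_Y = pa_Y*} 1{y* = y} · ∏_{Y ∈ V∖X, pa_Y ≠ pa_Y*} P_M(Y = y* | Pa_Y = pa_Y*)`,
where for each `Y`, `(y, pa_Y)` are the values of `Y` and its parents read off from
`(u, v)` (here the world `a`) and `(y*, pa_Y*)` those read off from `(u, v*)`
(here the world `b`, which agrees with `a` on the exogenous variables). -/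
theorem pnBasicCond_factorizes
    {ν : Type} {Val : ν → Type} [Fintype ν] [∀ i, Fintype (Val i)] [∀ i, Nonempty (Val i)]
    (M : CM ν Val) (hM : M.WF)
    (a : Asg Val) (ha : 0 < M.joint a)
    (X : Finset ν) (hX : ∀ i ∈ X, i ∉ M.exo) (xv : Asg Val)
    (b : Asg Val) (hbu : ∀ i ∈ M.exo, b i = a i) (hbx : ∀ i ∈ X, b i = xv i) :
    M.pnBasicCond a X xv M.exoᶜ b
      = ∏ i ∈ M.exoᶜ \ X,
          (if ∀ j ∈ M.pa i, a j = b j then (if b i = a i then (1 : ℝ) else 0)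
           else M.cpt i b (b i)) := by
  have hja : M.exoProb a * ∏ i : {i : ν // i ∉ M.exo}, M.cpt i.1 a (a i.1) = M.joint a :=
    (M.prod_split fun i => M.cpt i a (a i)).symm
  have hE : M.exoProb a ≠ 0 := left_ne_zero_of_mul (hja ▸ ha.ne')
  have hV : ∏ i : {i : ν // i ∉ M.exo}, M.cpt i.1 a (a i.1) ≠ 0 :=
    right_ne_zero_of_mul (hja ▸ ha.ne')
  unfold CM.pnBasicCond extBasicCond
  refine (congrArg₂ (· / ·) (M.sum_poWorld_actual a (fun _ => Iff.rfl) _)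
    (M.sum_poWorld_actual a (fun _ => Iff.rfl) _)).trans ?_
  have hnum : ∀ n : ((p : CM.POI M) → CM.POB M p),
      M.MN.cfBasic (X.image Sum.inl) (liftAsg xv) (M.exoᶜ.image Sum.inl) (liftAsg b)
          (M.poWorld a n) * M.MN.joint (M.poWorld a n)
        = M.exoProb a *
          ((∏ i : {i : ν // i ∉ M.exo}, if i.1 ∈ X then 1 else M.poEq b n i) *
            ((∏ i, M.poEq a n i) * M.poProb n)) := by
    intro n
    rw [M.joint_poWorld]
    by_cases hn : M.poProb n = 0
    · simp [hn]
    · rw [M.cfBasic_poWorld hM a X hX xv b hbu hbx n (mul_ne_zero hE hn)]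
      ring
  -- With `univ` in place of `X` in `sum_poEq`, no equation is imposed on `b`.
  have hden := M.sum_poEq hM a b univ
  simp only [Finset.mem_univ, if_true, Finset.prod_const_one, one_mul, mul_one] at hden
  refine (congrArg (· / _) (Finset.sum_congr rfl fun n _ => hnum n)).trans ?_
  simp only [M.joint_poWorld, mul_assoc, ← Finset.mul_sum]
  rw [hden, M.sum_poEq hM a b X, Finset.prod_mul_distrib, mul_div_mul_left _ _ hE,
    mul_div_cancel_left₀ _ hV]
  have hsub : ∀ f : ν → ℝ, ∏ i : {i : ν // i ∉ M.exo}, (if i.1 ∈ X then 1 else f i.1)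
      = ∏ i ∈ M.exoᶜ \ X, f i := by
    intro f
    rw [← Finset.prod_subtype M.exoᶜ (by simp) (fun i => if i ∈ X then 1 else f i),
      Finset.prod_ite, Finset.prod_const_one, one_mul]
    refine Finset.prod_congr ?_ fun _ _ => rfl
    ext i; simp
  exact hsub fun i => if ∀ j ∈ M.pa i, a j = b j then (if b i = a i then (1 : ℝ) else 0)
    else M.cpt i b (b i)

end
end

section
/- The equivalence of the B-semantics and the PO-semantics does not extend to complex counterfactuals: let M be the causal model with binary endogenous variables X and Y, graph X → Y, conditional probabilities P(Y=1 | X=1) = p and P(Y=1 | X=0) = q with 0 < p < q < 1, and P(X=0) > 0. Then P^B((Y=1)_{X←1}, (Y=0)_{X←1} | X=0, Y=0) = p(1−p), whereas P^N((Y=1)_{X←1}, (Y=0)_{X←1} | X=0, Y=0) = 0. -/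
/-!
Under the B-semantics each conjunct of a complex counterfactual is evaluated separately in the
actualized refinement. At the world `X = 0, Y = 0` the refinement leaves `P(Y | X = 1)` untouched,
so the two conjuncts have probabilities `p` and `1 - p`, which are multiplied (`pbBasic_M2`).
In the PO-SCM the potential outcome `Y_{X=1}` is an exogenous variable whose value is part of the
world, so in each world the counterfactual `(Y = b)_{X ← 1}` has probability `0` unless `b` is that
value (`cfBasic_MN_M2_eq_zero`). As `b` cannot be both `1` and `0`, every summand vanishes.
-/

open Finset

noncomputable section

attribute [local instance] Classical.propDecidable

/-- The causal model of Example 3: binary endogenous variables `X` (index `false`) and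
`Y` (index `true`) with graph `X → Y`, `P(X=1) = px1`, `P(Y=1 | X=1) = p` and
`P(Y=1 | X=0) = q` (the exogenous variables determining `X` are left implicit:
`X` has no parents). Values: `true` is `1`, `false` is `0`. -/
def M2 (p q px1 : ℝ) : CM Bool (fun _ => Bool) where
  exo := ∅
  pa := fun i => match i with
    | false => ∅
    | true => {false}
  ord := fun i => match i with
    | false => 0
    | true => 1
  cpt := fun i => match i with
    | false => fun _ b => if b then px1 else 1 - px1
    | true => fun w b =>
        if w false then (if b then p else 1 - p) else (if b then q else 1 - q)

/-- A sum over the assignments to two binary variables, written out. The `Fintype` instance is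
arbitrary, since the sums in the definitions are formed with classical decidability. -/
lemma sum_boolAsg (inst : Fintype (Asg fun _ : Bool => Bool))
    (f : (Asg fun _ : Bool => Bool) → ℝ) :
    @Finset.sum _ _ _ (@Finset.univ _ inst) f =
      f (fun _ => true) + f (fun i => !i) + (f (fun i => i) + f (fun _ => false)) := by
  have e := Fintype.sum_equiv (Equiv.boolArrowEquivProd Bool) f
    (fun x => f ((Equiv.boolArrowEquivProd Bool).symm x))
    (fun x => congrArg f (Equiv.symm_apply_apply _ x).symm)
  have h1 : (Equiv.boolArrowEquivProd Bool).symm (true, true) = fun _ => true := by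
    funext i; cases i <;> rfl
  have h2 : (Equiv.boolArrowEquivProd Bool).symm (true, false) = fun i => !i := by
    funext i; cases i <;> rfl
  have h3 : (Equiv.boolArrowEquivProd Bool).symm (false, true) = fun i => i := by
    funext i; cases i <;> rfl
  have h4 : (Equiv.boolArrowEquivProd Bool).symm (false, false) = fun _ => false := by
    funext i; cases i <;> rfl
  rw [Fintype.sum_prod_type] at e
  simp only [Fintype.sum_bool, h1, h2, h3, h4] at e
  convert e using 2

/-- At the world `X = 0, Y = 0`, the B-probability of `(Y = b)_{X ← 1}` is `P(Y = b | X = 1)`. -/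
lemma pbBasic_M2 (p q px1 : ℝ) (b : Bool) :
    (M2 p q px1).pbBasic (fun _ => false) {false} (fun _ => true) {true} (fun _ => b) =
      if b then p else 1 - p := by
  have hc : ({false} : Finset Bool)ᶜ = {true} := by decide
  have hc' : ∀ inst : DecidableEq Bool,
      @compl _ (@Finset.booleanAlgebra _ _ inst).toCompl ({false} : Finset Bool) = {true} := by
    intro inst
    rw [← hc]
    congr
    exact Subsingleton.elim _ _
  unfold CM.pbBasic CM.cfBasic CM.pdo
  simp only [sum_boolAsg, hc']
  cases b <;> simp [CM.refine, M2]

/-- In the PO-SCM, `(Y = b)_{X ← 1}` has probability `0` in a world where the potential outcome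
variable `Y_{X=1}` does not take the value `b`. -/
lemma cfBasic_MN_M2_eq_zero (p q px1 : ℝ)
    (w : Asg (SumVal (fun _ : Bool => Bool) (CM.POB (M2 p q px1)))) (b : Bool)
    (hb : b ≠ w (Sum.inr ⟨⟨true, Finset.notMem_empty _⟩, fun _ => true⟩)) :
    (M2 p q px1).MN.cfBasic (Finset.image Sum.inl {false}) (liftAsg fun _ => true)
      (Finset.image Sum.inl {true}) (liftAsg fun _ => b) w = 0 := by
  unfold CM.cfBasic
  rw [Finset.sum_eq_zero, zero_div]
  intro w' _
  split_ifs with h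
  swap
  · rfl
  unfold CM.pdo
  split_ifs with hX
  swap
  · rfl
  obtain ⟨hexo, hY⟩ := h
  have hx : w' (Sum.inl false) = true := hX (Sum.inl false) (by simp)
  have hy : w' (Sum.inl true) = b := hY (Sum.inl true) (by simp)
  have hu : ∀ u, w' (Sum.inr u) = w (Sum.inr u) := fun u => hexo _ (by simp [CM.MN])
  -- The structural equation for `Y` is violated, so its factor in the product vanishes.
  refine Finset.prod_eq_zero (i := Sum.inl true) (by simp) ?_
  have hpa : (fun k : {j // j ∈ (M2 p q px1).pa true} => w' (Sum.inl k.1)) = fun _ => true := by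
    funext k
    obtain ⟨k, hk⟩ := k
    have : k = false := Finset.mem_singleton.1 hk
    subst this
    exact hx
  have hne : ¬ (w' (Sum.inl true) = w' (Sum.inr ⟨⟨true, Finset.notMem_empty _⟩,
      fun k : {j // j ∈ (M2 p q px1).pa true} => w' (Sum.inl k.1)⟩)) := by
    intro e
    refine hb (hy.symm.trans (e.trans (Eq.trans ?_ (hu _))))
    exact congrArg (fun κ : (M2 p q px1).PaAsg true =>
      w' (Sum.inr ⟨⟨true, Finset.notMem_empty _⟩, κ⟩)) hpa
  have hmem : true ∉ (M2 p q px1).exo := Finset.notMem_empty _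
  unfold CM.MN
  dsimp only
  rw [dif_neg hmem]
  exact if_neg hne

/-- The equivalence of the B-semantics and the PO-semantics does not extend to complex
counterfactuals: in the model `M2` (with `0 < p < q < 1` and `P(X=0) > 0`),
`P^B((Y=1)_{X←1}, (Y=0)_{X←1} | X=0, Y=0) = p(1−p)`, whereas
`P^N((Y=1)_{X←1}, (Y=0)_{X←1} | X=0, Y=0) = 0`. -/
theorem pb_ne_pn_complex (p q px1 : ℝ) (hp : 0 < p) (hpq : p < q) (hq : q < 1)
    (hpx0 : 0 ≤ px1) (hpx1 : px1 < 1) :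
    (M2 p q px1).pbProbCond
        [⟨{false}, fun _ => true, {true}, fun _ => true⟩,
         ⟨{false}, fun _ => true, {true}, fun _ => false⟩]
        {false, true} (fun _ => false)
      = p * (1 - p) ∧
    (M2 p q px1).pnProbCond
        [⟨{false}, fun _ => true, {true}, fun _ => true⟩,
         ⟨{false}, fun _ => true, {true}, fun _ => false⟩]
        {false, true} (fun _ => false)
      = 0 := by
  constructor
  · have hq' : (1 - q) ≠ 0 := by linarith
    have hx' : (1 - px1) ≠ 0 := by linarith
    unfold CM.pbProbCond
    simp only [sum_boolAsg]
    simp [pbBasic_M2, CM.joint]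
    simp [M2]
    field_simp
  · unfold CM.pnProbCond extProbCond CM.cfProbCond
    rw [Finset.sum_eq_zero, zero_div]
    intro w _
    split_ifs
    swap
    · exact zero_mul _
    by_cases h : true = w (Sum.inr ⟨⟨true, Finset.notMem_empty _⟩, fun _ => true⟩)
    · have := cfBasic_MN_M2_eq_zero p q px1 w false (by rw [← h]; decide)
      simp [liftCFEvent] at this ⊢
      simp [this]
    · have := cfBasic_MN_M2_eq_zero p q px1 w true h
      simp [liftCFEvent] at this ⊢
      simp [this]

end
end
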